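/- arXiv:2103.15799 — 2 statements merged into one kernel-verified Lean document; each statement's English description precedes it below -/
import Mathlib

section
/- A complete first-order theory T is NIP if and only if for every family (āᵢ, b̄ᵢ : i ∈ ℚ) of tuples in a model of T which is L*-indiscernible when indexed by the random ordered bipartite graph G*, the two sequences (āᵢ : i ∈ ℚ) and (b̄ᵢ : i ∈ ℚ) are mutually indiscernible. -/
open FirstOrder FirstOrder.Language

universe u v

/-- An elementary extension of `M`: a structure together with an elementary embedding of `M`
into it. -/
structure ElemExt (L : FirstOrder.Language.{u, v}) (M : Type (max u v)) [L.Structure M] where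
  carrier : Type (max u v)
  [str : L.Structure carrier]
  emb : M ↪ₑ[L] carrier

attribute [instance] ElemExt.str

/-- A formula `φ(x̄; ȳ)` (without parameters) has the order property with respect to a theory
`T` if in some model of `T` there are sequences `(āᵢ : i < ω)` and `(b̄ⱼ : j < ω)` such that
`φ(āᵢ; b̄ⱼ)` holds iff `i < j`. -/
def FormulaHasOP {L : FirstOrder.Language.{u, v}} (T : L.Theory) {α β : Type*}
    (φ : L.Formula (α ⊕ β)) : Prop :=
  ∃ (N : FirstOrder.Language.Theory.ModelType.{u, v, max u v} T)
    (a : ℕ → α → N) (b : ℕ → β → N),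
    ∀ i j : ℕ, φ.Realize (Sum.elim (a i) (b j)) ↔ i < j

/-- A formula `φ(x̄; ȳ)` (without parameters) has the independence property with respect to a
theory `T` if in some model of `T` there are tuples `(āᵢ : i < ω)` and `(b̄_S : S ⊆ ω)` such
that `φ(āᵢ; b̄_S)` holds iff `i ∈ S`. -/
def FormulaHasIP {L : FirstOrder.Language.{u, v}} (T : L.Theory) {α β : Type*}
    (φ : L.Formula (α ⊕ β)) : Prop :=
  ∃ (N : FirstOrder.Language.Theory.ModelType.{u, v, max u v} T)
    (a : ℕ → α → N) (b : Set ℕ → β → N),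
    ∀ (i : ℕ) (S : Set ℕ), φ.Realize (Sum.elim (a i) (b S)) ↔ i ∈ S

/-- A formula `φ(x̄; ȳ)` with parameters `c` from `M` has the order property if in some
elementary extension of `M` there are sequences `(āᵢ : i < ω)` and `(b̄ⱼ : j < ω)` such that
`φ(āᵢ; b̄ⱼ; c)` holds iff `i < j`. -/
def HasOPWithParams {L : FirstOrder.Language.{u, v}} {M : Type (max u v)} [L.Structure M]
    {α β γ : Type*} (φ : L.Formula ((α ⊕ β) ⊕ γ)) (c : γ → M) : Prop :=
  ∃ (N : ElemExt L M) (a : ℕ → α → N.carrier) (b : ℕ → β → N.carrier),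
    ∀ i j : ℕ, φ.Realize (Sum.elim (Sum.elim (a i) (b j)) (N.emb ∘ c)) ↔ i < j

/-- A formula `φ(x̄; ȳ)` with parameters `c` from `M` has the independence property if in some
elementary extension of `M` there are tuples `(āᵢ : i < ω)` and `(b̄_S : S ⊆ ω)` such that
`φ(āᵢ; b̄_S; c)` holds iff `i ∈ S`. -/
def HasIPWithParams {L : FirstOrder.Language.{u, v}} {M : Type (max u v)} [L.Structure M]
    {α β γ : Type*} (φ : L.Formula ((α ⊕ β) ⊕ γ)) (c : γ → M) : Prop :=
  ∃ (N : ElemExt L M) (a : ℕ → α → N.carrier) (b : Set ℕ → β → N.carrier),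
    ∀ (i : ℕ) (S : Set ℕ), φ.Realize (Sum.elim (Sum.elim (a i) (b S)) (N.emb ∘ c)) ↔ i ∈ S

/-- The family of tuples `(c̄ᵢ : i ∈ ι)` is an indiscernible sequence over the set `A`:
any two strictly increasing tuples of indices realize the same formulas with parameters
from `A`. -/
def IsIndiscernibleOver {L : FirstOrder.Language.{u, v}} {M : Type (max u v)} [L.Structure M]
    {ι : Type*} [LinearOrder ι] {γ : Type*} (c : ι → γ → M) (A : Set M) : Prop :=
  ∀ (n m : ℕ) (i j : Fin n → ι), StrictMono i → StrictMono j →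
    ∀ p : Fin m → M, (∀ l, p l ∈ A) →
      ∀ φ : L.Formula (Fin n × γ ⊕ Fin m),
        φ.Realize (Sum.elim (fun v : Fin n × γ => c (i v.1) v.2) p) ↔
          φ.Realize (Sum.elim (fun v : Fin n × γ => c (j v.1) v.2) p)

/-- The family of tuples `(c̄ᵢ : i ∈ ι)` is an indiscernible sequence. -/
def IsIndiscernible {L : FirstOrder.Language.{u, v}} {M : Type (max u v)} [L.Structure M]
    {ι : Type*} [LinearOrder ι] {γ : Type*} (c : ι → γ → M) : Prop :=
  IsIndiscernibleOver (L := L) c ∅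

/-- Two families of tuples are mutually indiscernible if each is indiscernible over the union
of the tuples of the other. -/
def MutuallyIndiscernible {L : FirstOrder.Language.{u, v}} {M : Type (max u v)} [L.Structure M]
    {ι : Type*} [LinearOrder ι] {γ δ : Type*} (a : ι → γ → M) (b : ι → δ → M) : Prop :=
  IsIndiscernibleOver (L := L) a (⋃ i, Set.range (b i)) ∧
    IsIndiscernibleOver (L := L) b (⋃ i, Set.range (a i))

/-- The family of tuples `(c̄ᵢ : i ∈ ι)` is totally indiscernible: any two tuples of distinct
indices (in any order) realize the same formulas. -/
def IsTotallyIndiscernible {L : FirstOrder.Language.{u, v}} {M : Type (max u v)} [L.Structure M]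
    {ι : Type*} [LinearOrder ι] {γ : Type*} (c : ι → γ → M) : Prop :=
  ∀ (n : ℕ) (i j : Fin n → ι), Function.Injective i → Function.Injective j →
    ∀ φ : L.Formula (Fin n × γ),
      φ.Realize (fun v : Fin n × γ => c (i v.1) v.2) ↔
        φ.Realize (fun v : Fin n × γ => c (j v.1) v.2)

/-- A set in a linear order is dense (in the order) and unbounded above and below. -/
def DenseUnbounded {α : Type*} [LinearOrder α] (S : Set α) : Prop :=
  (∀ x y : α, x < y → ∃ z ∈ S, x < z ∧ z < y) ∧ (∀ x : α, ∃ z ∈ S, z < x) ∧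
    (∀ x : α, ∃ z ∈ S, x < z)

/-- `R : α → β → Prop` presents (a structure isomorphic to) the random ordered bipartite
graph `G*`, i.e. the Fraïssé limit of finite ordered bipartite graphs: both parts are
countable nonempty dense linear orders without endpoints and the edge relation is generic. -/
def IsRandomOBG {α β : Type*} [LinearOrder α] [LinearOrder β] (R : α → β → Prop) : Prop :=
  Countable α ∧ Countable β ∧ Nonempty α ∧ Nonempty β ∧
    (∀ F G : Finset β, Disjoint F G →
      DenseUnbounded {x : α | (∀ f ∈ F, R x f) ∧ ∀ g ∈ G, ¬R x g}) ∧
    (∀ F G : Finset α, Disjoint F G →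
      DenseUnbounded {y : β | (∀ f ∈ F, R f y) ∧ ∀ g ∈ G, ¬R g y})

/-- An element of the random ordered bipartite graph `G*`, whose two parts `U(G*)` and
`V(G*)` are both identified with `ℚ`: `Sum.inl` is the `U`-part, `Sum.inr` the `V`-part. -/
abbrev GStarIdx : Type := ℚ ⊕ ℚ

/-- The index of the pair `(s, q)`: in the `U`-part if `s = true`, in the `V`-part
otherwise. -/
def mkIdx {n : ℕ} (s : Fin n → Bool) (q : Fin n → ℚ) : Fin n → GStarIdx := fun k =>
  bif s k then Sum.inl (q k) else Sum.inr (q k)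

/-- Two pairs of elements of `G*` (with edge relation `R`) have the same quantifier-free
`L*`-type, where `L* = {U, ≤_U, V, ≤_V, R}`. -/
def SamePairType (R : ℚ → ℚ → Prop) :
    GStarIdx → GStarIdx → GStarIdx → GStarIdx → Prop
  | Sum.inl p, Sum.inl q, Sum.inl p', Sum.inl q' => (p ≤ q ↔ p' ≤ q') ∧ (q ≤ p ↔ q' ≤ p')
  | Sum.inr p, Sum.inr q, Sum.inr p', Sum.inr q' => (p ≤ q ↔ p' ≤ q') ∧ (q ≤ p ↔ q' ≤ p')
  | Sum.inl p, Sum.inr q, Sum.inl p', Sum.inr q' => R p q ↔ R p' q'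
  | Sum.inr q, Sum.inl p, Sum.inr q', Sum.inl p' => R p q ↔ R p' q'
  | _, _, _, _ => False

/-- Two tuples of elements of `G*` (with edge relation `R`) have the same quantifier-free
`L*`-type. -/
def SameQfType (R : ℚ → ℚ → Prop) {n : ℕ} (i j : Fin n → GStarIdx) : Prop :=
  ∀ k l : Fin n, SamePairType R (i k) (i l) (j k) (j l)

/-- The variables carried by a coordinate of a mixed tuple: a `U`-index carries an `x̄`-tuple
of length `da`, a `V`-index a `ȳ`-tuple of length `db`. -/
def MixVar (da db : ℕ) : Bool → Type
  | true => Fin da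
  | false => Fin db

/-- Choose the `a`-tuple or the `b`-tuple according to the side. -/
def pickSide {M : Type*} {da db : ℕ} (a : Fin da → M) (b : Fin db → M) :
    (s : Bool) → MixVar da db s → M
  | true, w => a w
  | false, w => b w

/-- The family `(āᵢ : i ∈ U(G*) ≅ ℚ) ∪ (b̄ⱼ : j ∈ V(G*) ≅ ℚ)`, indexed by the random ordered
bipartite graph `G*` with edge relation `R`, is `L*`-indiscernible: index tuples with the same
quantifier-free `L*`-type in `G*` realize the same `L`-formulas in `M`. -/
def IsLStarIndiscernible {L : FirstOrder.Language.{u, v}} {M : Type (max u v)} [L.Structure M]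
    (R : ℚ → ℚ → Prop) {da db : ℕ} (a : ℚ → Fin da → M) (b : ℚ → Fin db → M) : Prop :=
  ∀ (n : ℕ) (s : Fin n → Bool) (q q' : Fin n → ℚ),
    SameQfType R (mkIdx s q) (mkIdx s q') →
      ∀ φ : L.Formula ((k : Fin n) × MixVar da db (s k)),
        φ.Realize (fun v => pickSide (a (q v.1)) (b (q v.1)) (s v.1) v.2) ↔
          φ.Realize (fun v => pickSide (a (q' v.1)) (b (q' v.1)) (s v.1) v.2)

/-!
Suppose `T` is NIP and the family is `L*`-indiscernible, but some formula `ψ` holds at one pair of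
increasing tuples of indices and fails at another, the edges between the two tuples forming the
patterns `E` and `E'` respectively. Choose disjoint increasing tuples `X₀, X₁, …` in the first part
of `G*`. Given a finite piece of `S ⊆ ω`, genericity yields an increasing tuple `Y` in the second
part whose edges to `Xₖ` form the pattern `E` if `k ∈ S`, and `E'` otherwise. Then `ψ(Xₖ; Y)` holds
iff `k ∈ S`, so `ψ` has the independence property by compactness.

Conversely, if `φ` has the independence property, it can encode the relation that the bit of `s`
at position `v` is `1`, between finite bit strings `s` and positions `v`. View a word whose letters
are columns of bits as a matrix with variable columns; a row of it, with bits substituted for the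
variables, is a bit string, and a variable marks a position. A Hales–Jewett type argument with
idempotent ultrafilters produces generic words which look the same after constant letters are
substituted for some of their variables. Along such a word the type of finitely many rows and
positions depends only on the bits of these rows at these positions, so letting the bits of row `i`
be given by the edges at `i` yields, in an ultrapower, an `L*`-indiscernible family with
`φ(āᵢ; b̄ⱼ)` iff `R i j`. This replaces the structural Ramsey theorem for ordered bipartite graphs.
Two vertices with and without an edge to the same `j` show that this family is not mutually
indiscernible.
-/

open Filter Function

section StrictlyMonotoneTuples

theorem exists_strictMono_comp_of_le_iff_le {ι α : Type*} [Finite ι] [LinearOrder α] {q q' : ι → α}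
    (h : ∀ k l, q k ≤ q l ↔ q' k ≤ q' l) :
    ∃ (r : ℕ) (κ : ι → Fin r) (x x' : Fin r → α),
      Surjective κ ∧ StrictMono x ∧ StrictMono x' ∧ q = x ∘ κ ∧ q' = x' ∘ κ := by
  cases nonempty_fintype ι
  let e := (Finset.univ.image q).orderIsoOfFin rfl
  let κ : ι → Fin _ := fun k => e.symm ⟨q k, Finset.mem_image_of_mem q (Finset.mem_univ k)⟩
  have le_iff (k l : ι) : κ k ≤ κ l ↔ q k ≤ q l := e.symm.le_iff_le
  have surj : Surjective κ := fun i => by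
    obtain ⟨k, -, hk⟩ := Finset.mem_image.mp (e i).2
    exact ⟨k, by simp [κ, hk]⟩
  let σ := surjInv surj
  have κσ (i) : κ (σ i) = i := surjInv_eq surj i
  refine ⟨_, κ, fun i => e i, q' ∘ σ, surj, fun i j hij => e.strictMono hij, fun i j hij => ?_,
    funext fun k => by simp [κ], funext fun k => le_antisymm ?_ ?_⟩
  · rw [comp_apply, comp_apply, ← not_le, ← h, ← le_iff, κσ, κσ]
    exact not_le.mpr hij
  all_goals rw [comp_apply, comp_apply, ← h, ← le_iff, κσ]

/-- The assignment of values to variables which turns a formula `ψ(x̄₁, …, x̄ₙ; ȳ₁, …, ȳₘ)` into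
`ψ(ā_{x₁}, …, ā_{xₙ}; b̄_{y₁}, …, b̄_{yₘ})`, for families of tuples `(āᵢ)` and `(b̄ⱼ)`. The index
sets of the `x̄` and `ȳ` are arbitrary types `ι` and `κ`. -/
def jointAssignment {I J γ δ ι κ N : Type*} (a : I → γ → N) (b : J → δ → N) (x : ι → I)
    (y : κ → J) : (ι × γ) ⊕ (κ × δ) → N :=
  Sum.elim (fun v => a (x v.1) v.2) (fun v => b (y v.1) v.2)

theorem exists_pickSide_of_eq_true {M : Type*} {da db : ℕ} {s : Bool} (hs : s = true)
    (w : Fin da) :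
    ∃ u : MixVar da db s, ∀ (A : Fin da → M) (B : Fin db → M), pickSide A B s u = A w := by
  subst hs
  exact ⟨w, fun _ _ => rfl⟩

theorem exists_pickSide_of_eq_false {M : Type*} {da db : ℕ} {s : Bool} (hs : s = false)
    (w : Fin db) :
    ∃ u : MixVar da db s, ∀ (A : Fin da → M) (B : Fin db → M), pickSide A B s u = B w := by
  subst hs
  exact ⟨w, fun _ _ => rfl⟩

theorem pickSide_eq_left_or_right {M : Type*} {da db : ℕ} (s : Bool) (u : MixVar da db s) :
    (s = true ∧ ∃ w, ∀ (A : Fin da → M) (B : Fin db → M), pickSide A B s u = A w) ∨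
      (s = false ∧ ∃ w, ∀ (A : Fin da → M) (B : Fin db → M), pickSide A B s u = B w) := by
  cases s
  · exact .inr ⟨rfl, u, fun _ _ => rfl⟩
  · exact .inl ⟨rfl, u, fun _ _ => rfl⟩

variable {L : FirstOrder.Language.{u, v}} {M : Type (max u v)} [L.Structure M]
  {R : ℚ → ℚ → Prop} {da db : ℕ} {a : ℚ → Fin da → M} {b : ℚ → Fin db → M}

theorem IsLStarIndiscernible.realize_jointAssignment_iff
    (hind : IsLStarIndiscernible (L := L) R a b)
    {n m : ℕ} {x x' : Fin n → ℚ} {y y' : Fin m → ℚ} (hx : StrictMono x) (hx' : StrictMono x')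
    (hy : StrictMono y) (hy' : StrictMono y') (hR : ∀ i j, R (x i) (y j) ↔ R (x' i) (y' j))
    (ψ : L.Formula ((Fin n × Fin da) ⊕ (Fin m × Fin db))) :
    ψ.Realize (jointAssignment a b x y) ↔ ψ.Realize (jointAssignment a b x' y') := by
  let s : Fin (n + m) → Bool := Fin.append (fun _ => true) (fun _ => false)
  have hvar (v : (Fin n × Fin da) ⊕ (Fin m × Fin db)) :
      ∃ u : (k : Fin (n + m)) × MixVar da db (s k), ∀ (X : Fin n → ℚ) (Y : Fin m → ℚ),
        pickSide (a (Fin.append X Y u.1)) (b (Fin.append X Y u.1)) (s u.1) u.2 =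
          jointAssignment a b X Y v := by
    rcases v with ⟨i, w⟩ | ⟨j, w⟩
    · obtain ⟨u, hu⟩ := exists_pickSide_of_eq_true (M := M) (db := db) (s := s (i.castAdd m))
        (by simp [s]) w
      exact ⟨⟨i.castAdd m, u⟩, fun X Y => by simp [hu, jointAssignment]⟩
    · obtain ⟨u, hu⟩ := exists_pickSide_of_eq_false (M := M) (da := da) (s := s (j.natAdd n))
        (by simp [s]) w
      exact ⟨⟨j.natAdd n, u⟩, fun X Y => by simp [hu, jointAssignment]⟩
  choose f hf using hvar
  have htype : SameQfType R (mkIdx s (Fin.append x y)) (mkIdx s (Fin.append x' y')) := by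
    intro k l
    induction k using Fin.addCases <;> induction l using Fin.addCases <;>
      simp [mkIdx, s, SamePairType, hx.le_iff_le, hx'.le_iff_le, hy.le_iff_le, hy'.le_iff_le, hR]
  have key := hind (n + m) s _ _ htype (ψ.relabel f)
  simp only [Formula.realize_relabel] at key
  convert key using 2 <;> exact funext fun v => (hf v _ _).symm

theorem isLStarIndiscernible_of_forall_strictMono
    (h : ∀ (n m : ℕ) (x x' : Fin n → ℚ) (y y' : Fin m → ℚ), StrictMono x → StrictMono x' →
      StrictMono y → StrictMono y' → (∀ i j, R (x i) (y j) ↔ R (x' i) (y' j)) →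
      ∀ ψ : L.Formula ((Fin n × Fin da) ⊕ (Fin m × Fin db)),
        ψ.Realize (jointAssignment a b x y) ↔ ψ.Realize (jointAssignment a b x' y')) :
    IsLStarIndiscernible (L := L) R a b := by
  intro n s q q' htype φ
  let U := {k // s k = true}
  let V := {k // s k = false}
  have hU (k l : U) : q k ≤ q l ↔ q' k ≤ q' l := by
    have hkl := htype k l
    simp only [mkIdx, k.2, l.2, cond_true, SamePairType] at hkl
    exact hkl.1
  have hV (k l : V) : q k ≤ q l ↔ q' k ≤ q' l := by
    have hkl := htype k l
    simp only [mkIdx, k.2, l.2, cond_false, SamePairType] at hkl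
    exact hkl.1
  have hUV (k : U) (l : V) : R (q k) (q l) ↔ R (q' k) (q' l) := by
    have hkl := htype k l
    simpa only [mkIdx, k.2, l.2, cond_true, cond_false, SamePairType] using hkl
  obtain ⟨r, κ, x, x', hκ, hx, hx', hqx, hqx'⟩ := exists_strictMono_comp_of_le_iff_le hU
  obtain ⟨t, τ, y, y', hτ, hy, hy', hqy, hqy'⟩ := exists_strictMono_comp_of_le_iff_le hV
  have hxκ (k : U) : x (κ k) = q k ∧ x' (κ k) = q' k := ⟨congrFun hqx.symm k, congrFun hqx'.symm k⟩
  have hyτ (l : V) : y (τ l) = q l ∧ y' (τ l) = q' l := ⟨congrFun hqy.symm l, congrFun hqy'.symm l⟩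
  have hR : ∀ i j, R (x i) (y j) ↔ R (x' i) (y' j) := by
    refine hκ.forall.mpr fun k => hτ.forall.mpr fun l => ?_
    rw [(hxκ k).1, (hxκ k).2, (hyτ l).1, (hyτ l).2, hUV]
  have hvar (v : (k : Fin n) × MixVar da db (s k)) : ∃ w,
      pickSide (a (q v.1)) (b (q v.1)) (s v.1) v.2 = jointAssignment a b x y w ∧
        pickSide (a (q' v.1)) (b (q' v.1)) (s v.1) v.2 = jointAssignment a b x' y' w := by
    rcases pickSide_eq_left_or_right (M := M) (s v.1) v.2 with ⟨hk, w, hw⟩ | ⟨hk, w, hw⟩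
    · exact ⟨.inl (κ ⟨v.1, hk⟩, w), by simp [hw, jointAssignment, hxκ]⟩
    · exact ⟨.inr (τ ⟨v.1, hk⟩, w), by simp [hw, jointAssignment, hyτ]⟩
  choose f hf hf' using hvar
  simpa only [Formula.realize_relabel, comp_def, hf, hf'] using
    h r t x x' y y' hx hx' hy hy' hR (φ.relabel f)

end StrictlyMonotoneTuples

section MutualIndiscernibility

variable {L : FirstOrder.Language.{u, v}} {M : Type (max u v)} [L.Structure M]
  {ι γ δ : Type*} [LinearOrder ι] {a : ι → γ → M} {b : ι → δ → M}

theorem isIndiscernibleOver_iUnion_range_of_forall_strictMono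
    (h : ∀ (n m : ℕ) (x x' : Fin n → ι) (y : Fin m → ι), StrictMono x → StrictMono x' →
      StrictMono y → ∀ ψ : L.Formula ((Fin n × γ) ⊕ (Fin m × δ)),
        ψ.Realize (jointAssignment a b x y) ↔ ψ.Realize (jointAssignment a b x' y)) :
    IsIndiscernibleOver (L := L) a (⋃ i, Set.range (b i)) := by
  intro n m x x' hx hx' p hp φ
  simp only [Set.mem_iUnion, Set.mem_range] at hp
  choose c e hce using hp
  obtain ⟨r, κ, y, -, -, hy, -, rfl, -⟩ :=
    exists_strictMono_comp_of_le_iff_le (q := c) (q' := c) fun _ _ => Iff.rfl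
  let f : (Fin n × γ) ⊕ Fin m → (Fin n × γ) ⊕ (Fin r × δ) := Sum.map id fun l => (κ l, e l)
  have hf (z : Fin n → ι) :
      jointAssignment a b z y ∘ f = Sum.elim (fun v : Fin n × γ => a (z v.1) v.2) p := by
    ext (v | l)
    · rfl
    · exact hce l
  simpa only [Formula.realize_relabel, hf] using h n r x x' y hx hx' hy (φ.relabel f)

theorem mutuallyIndiscernible_of_forall_strictMono
    (h : ∀ (n m : ℕ) (x x' : Fin n → ι) (y y' : Fin m → ι), StrictMono x → StrictMono x' →
      StrictMono y → StrictMono y' → ∀ ψ : L.Formula ((Fin n × γ) ⊕ (Fin m × δ)),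
        ψ.Realize (jointAssignment a b x y) ↔ ψ.Realize (jointAssignment a b x' y')) :
    MutuallyIndiscernible (L := L) a b := by
  refine ⟨isIndiscernibleOver_iUnion_range_of_forall_strictMono fun n m x x' y hx hx' hy =>
      h n m x x' y y hx hx' hy hy,
    isIndiscernibleOver_iUnion_range_of_forall_strictMono fun m n y y' x hy hy' hx ψ => ?_⟩
  have hswap (z : Fin m → ι) :
      jointAssignment a b x z ∘ Sum.swap = jointAssignment b a z x := by
    ext (v | v) <;> rfl
  simpa only [Formula.realize_relabel, hswap] using
    h n m x x y y' hx hx hy hy' (ψ.relabel Sum.swap)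

end MutualIndiscernibility

section Compactness

variable {L : FirstOrder.Language.{u, v}} {T : L.Theory} {M : Type (max u v)} [L.Structure M]
  [Nonempty M]

theorem exists_ultrapower (hM : M ⊨ T) {Ω : Type} (U : Ultrafilter Ω) :
    ∃ (N : Theory.ModelType.{u, v, max u v} T) (ofFun : (Ω → M) → N),
      ∀ (β : Type*) (ψ : L.Formula β) (x : Ω → β → M),
        ψ.Realize (fun v => ofFun fun t => x t v) ↔ ∀ᶠ t in U, ψ.Realize (x t) := by
  have hN : (U : Filter Ω).Product (fun _ => M) ⊨ T := ⟨fun ψ hψ => by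
    rw [Ultraproduct.sentence_realize]
    exact .of_forall fun _ => Theory.realize_sentence_of_mem T hψ⟩
  exact ⟨.of T ((U : Filter Ω).Product fun _ => M),
    fun f => (f : (U : Filter Ω).Product fun _ => M), fun β ψ x =>
      Ultraproduct.realize_formula_cast (M := fun _ => M) ψ fun v t => x t v⟩

theorem formulaHasIP_of_forall_lt (hM : M ⊨ T) {α β : Type*} (φ : L.Formula (α ⊕ β))
    (a : ℕ → α → M)
    (h : ∀ (S : Set ℕ) (N : ℕ), ∃ c : β → M, ∀ i < N, φ.Realize (Sum.elim (a i) c) ↔ i ∈ S) :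
    FormulaHasIP T φ := by
  choose c hc using h
  obtain ⟨Q, ofFun, łoś⟩ := exists_ultrapower hM (Ultrafilter.of (atTop : Filter ℕ))
  refine ⟨Q, fun i z => ofFun fun _ => a i z, fun S z => ofFun fun N => c S N z, fun i S => ?_⟩
  have hassign : (Sum.elim (fun z => ofFun fun _ => a i z) fun z => ofFun fun N => c S N z) =
      fun v => ofFun fun N => Sum.elim (a i) (c S N) v := by
    ext (z | z) <;> rfl
  have hlarge : ∀ᶠ N in Ultrafilter.of (atTop : Filter ℕ),
      (φ.Realize (Sum.elim (a i) (c S N)) ↔ i ∈ S) :=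
    Ultrafilter.of_le _ ((eventually_gt_atTop i).mono fun N hN => hc S N i hN)
  rw [hassign, łoś, eventually_congr hlarge, eventually_const]

theorem FormulaHasIP.relabel {α β α' β' : Type*} {φ : L.Formula (α ⊕ β)} (h : FormulaHasIP T φ)
    (e : α ≃ α') (f : β ≃ β') : FormulaHasIP T (φ.relabel (Sum.map e f)) := by
  obtain ⟨N, a, b, hab⟩ := h
  refine ⟨N, fun i => a i ∘ e.symm, fun S => b S ∘ f.symm, fun i S => ?_⟩
  simp [Formula.realize_relabel, Sum.elim_comp_map, comp_assoc, hab]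

theorem exists_formulaHasIP_fin {α β : Type*} [Finite α] [Finite β] {φ : L.Formula (α ⊕ β)}
    (h : FormulaHasIP T φ) : ∃ (m n : ℕ) (ψ : L.Formula (Fin m ⊕ Fin n)), FormulaHasIP T ψ :=
  ⟨_, _, _, h.relabel (Finite.equivFin α) (Finite.equivFin β)⟩

end Compactness

section PatternSwap

theorem IsRandomOBG.exists_strictMono_right {α β ι : Type*} [LinearOrder α] [LinearOrder β]
    [Finite ι] {R : α → β → Prop} (hR : IsRandomOBG R) {c : ι → α} (hc : Injective c) {m : ℕ}
    (P : ι → Fin m → Prop) :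
    ∃ y : Fin m → β, StrictMono y ∧ ∀ i l, R (c i) (y l) ↔ P i l := by
  classical
  cases nonempty_fintype ι
  obtain ⟨-, -, -, _, -, generic⟩ := hR
  have : NoMaxOrder β := ⟨fun z => (generic ∅ ∅ (by simp)).2.2 z |>.imp fun _ h => h.2⟩
  obtain ⟨s, hs⟩ := Nat.exists_strictMono β
  have hslot (l : Fin m) : ∃ z, (∀ i, R (c i) z ↔ P i l) ∧ s l < z ∧ z < s (l + 1) := by
    have hdisj : Disjoint ({i | P i l} : Finset ι) ({i | ¬ P i l} : Finset ι) :=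
      Finset.disjoint_filter_filter_not ..
    obtain ⟨z, ⟨hpos, hneg⟩, hz⟩ := (generic _ _ ((Finset.disjoint_map ⟨c, hc⟩).mpr hdisj)).1 _ _
      (hs (Nat.lt_succ_self l))
    simp only [Finset.mem_map, Finset.mem_filter, Finset.mem_univ, true_and, Embedding.coeFn_mk,
      forall_exists_index, and_imp, forall_apply_eq_imp_iff₂] at hpos hneg
    exact ⟨z, fun i => ⟨not_imp_not.mp (hneg i), hpos i⟩, hz⟩
  choose y hy hlt hgt using hslot
  exact ⟨y, fun l l' hll' => ((hgt l).trans_le (hs.monotone hll')).trans (hlt l'),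
    fun i l => hy l i⟩

variable {L : FirstOrder.Language.{u, v}} {T : L.Theory} {M : Type (max u v)} [L.Structure M]
  [Nonempty M] {R : ℚ → ℚ → Prop} {da db : ℕ} {a : ℚ → Fin da → M} {b : ℚ → Fin db → M}

theorem IsLStarIndiscernible.formulaHasIP (hind : IsLStarIndiscernible (L := L) R a b)
    (hM : M ⊨ T) (hR : IsRandomOBG R) {n m : ℕ} {x x' : Fin n → ℚ} {y y' : Fin m → ℚ}
    (hx : StrictMono x) (hx' : StrictMono x') (hy : StrictMono y) (hy' : StrictMono y')
    {ψ : L.Formula ((Fin n × Fin da) ⊕ (Fin m × Fin db))}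
    (hψ : ψ.Realize (jointAssignment a b x y)) (hψ' : ¬ ψ.Realize (jointAssignment a b x' y')) :
    FormulaHasIP T ψ := by
  classical
  have : Countable (ℕ ×ₗ Fin n) := ofLex.injective.countable
  obtain ⟨u⟩ := Order.embedding_from_countable_to_dense (ℕ ×ₗ Fin n) ℚ
  let X (k : ℕ) (i : Fin n) : ℚ := u (toLex (k, i))
  have hX (k) : StrictMono (X k) := fun i j hij =>
    u.strictMono (Prod.Lex.toLex_lt_toLex.mpr (.inr ⟨rfl, hij⟩))
  refine formulaHasIP_of_forall_lt hM ψ (fun k v => a (X k v.1) v.2) fun S N => ?_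
  have hinj : Injective fun p : Fin N × Fin n => X p.1 p.2 := fun p p' h => by
    have := toLex.injective (u.injective h)
    grind
  obtain ⟨Y, hY, hXY⟩ := hR.exists_strictMono_right hinj fun p l =>
    if (p.1 : ℕ) ∈ S then R (x p.2) (y l) else R (x' p.2) (y' l)
  refine ⟨fun v => b (Y v.1) v.2, fun k hk => ?_⟩
  change ψ.Realize (jointAssignment a b (X k) Y) ↔ k ∈ S
  have hpattern (i l) : R (X k i) (Y l) ↔ if k ∈ S then R (x i) (y l) else R (x' i) (y' l) :=
    hXY (⟨k, hk⟩, i) l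
  by_cases hkS : k ∈ S
  · simp only [hkS, if_true] at hpattern ⊢
    exact iff_true_intro <|
      (hind.realize_jointAssignment_iff (hX k) hx hY hy hpattern ψ).mpr hψ
  · simp only [hkS, if_false] at hpattern ⊢
    exact iff_false_intro <| mt
      (hind.realize_jointAssignment_iff (hX k) hx' hY hy' hpattern ψ).mp hψ'

theorem IsLStarIndiscernible.mutuallyIndiscernible (hind : IsLStarIndiscernible (L := L) R a b)
    (hM : M ⊨ T) (hR : IsRandomOBG R)
    (hNIP : ∀ (m n : ℕ) (φ : L.Formula (Fin m ⊕ Fin n)), ¬ FormulaHasIP T φ) :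
    MutuallyIndiscernible (L := L) a b := by
  have himp {n m : ℕ} {x x' : Fin n → ℚ} {y y' : Fin m → ℚ} (hx : StrictMono x)
      (hx' : StrictMono x') (hy : StrictMono y) (hy' : StrictMono y')
      {ψ : L.Formula ((Fin n × Fin da) ⊕ (Fin m × Fin db))}
      (hψ : ψ.Realize (jointAssignment a b x y)) : ψ.Realize (jointAssignment a b x' y') := by
    by_contra hψ'
    obtain ⟨k, l, χ, hχ⟩ :=
      exists_formulaHasIP_fin (hind.formulaHasIP hM hR hx hx' hy hy' hψ hψ')
    exact hNIP k l χ hχ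
  exact mutuallyIndiscernible_of_forall_strictMono fun n m x x' y y' hx hx' hy hy' ψ =>
    ⟨himp hx hx' hy hy', himp hx' hx hy' hy⟩

end PatternSwap

section RandomGraph

theorem denseUnbounded_of_forall_exists_mem_Ioo {α : Type*} [LinearOrder α] [NoMinOrder α]
    [NoMaxOrder α] {S : Set α}
    (h : ∀ lo hi : α, lo < hi → ∃ z ∈ S, z ∈ Set.Ioo lo hi) : DenseUnbounded S := by
  refine ⟨h, fun x => ?_, fun x => ?_⟩
  · obtain ⟨lo, hlo⟩ := exists_lt x
    exact (h lo x hlo).imp fun _ hz => ⟨hz.1, hz.2.2⟩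
  · obtain ⟨hi, hhi⟩ := exists_gt x
    exact (h x hi hhi).imp fun _ hz => ⟨hz.1, hz.2.1⟩

theorem exists_finset_coding (α : Type*) [LinearOrder α] [Countable α] [Nontrivial α]
    [DenselyOrdered α] :
    ∃ (ν : α → ℕ) (c : α → Finset α), ∀ (F D : Finset α) (lo hi : α), lo < hi →
      ∃ x ∈ Set.Ioo lo hi, c x = F ∧ ∀ d ∈ D, ν d < ν x := by
  obtain ⟨ν, hν⟩ := exists_injective_nat α
  let Task := Finset α × Finset α × {I : α × α // I.1 < I.2}
  have : Nonempty Task := by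
    obtain ⟨lo, hi, hlohi⟩ := exists_pair_lt α
    exact ⟨∅, ∅, (lo, hi), hlohi⟩
  obtain ⟨task, htask⟩ := exists_surjective_nat Task
  let IsSolution (t : Task) (x : α) := x ∈ Set.Ioo t.2.2.1.1 t.2.2.1.2 ∧ ∀ d ∈ t.2.1, ν d < ν x
  have hfreq (n : ℕ) : ∃ᶠ k in atTop, ∃ x, ν x = k ∧ IsSolution (task n) x := by
    refine frequently_atTop.mpr fun N => ?_
    have hbdd : {x | ν x ≤ max N ((task n).2.1.sup ν)}.Finite :=
      (Set.finite_Iic _).preimage hν.injOn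
    obtain ⟨x, hx, hlarge⟩ := ((Set.Ioo_infinite (task n).2.2.2).sdiff hbdd).nonempty
    rw [Set.mem_ofPred_eq, not_le, max_lt_iff] at hlarge
    exact ⟨ν x, hlarge.1.le, x, rfl, hx, fun d hd => (Finset.le_sup hd).trans_lt hlarge.2⟩
  obtain ⟨φ, hφ, hsol⟩ := extraction_forall_of_frequently hfreq
  choose x hνx hx using hsol
  have hinj : Injective x := fun n n' h => hφ.injective (by rw [← hνx, ← hνx, h])
  refine ⟨ν, extend x (fun n => (task n).1) fun _ => ∅, fun F D lo hi hlohi => ?_⟩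
  obtain ⟨n, hn⟩ := htask (F, D, ⟨(lo, hi), hlohi⟩)
  have hxn := hx n
  rw [hn] at hxn
  exact ⟨x n, hxn.1, by rw [hinj.extend_apply, hn], hxn.2⟩

/-- The enumeration `ν` decides which end of an edge carries the information: the vertices adjacent
to `x` among those enumerated before `x` are the ones in `c x`. -/
theorem exists_isRandomOBG (α : Type*) [LinearOrder α] [Countable α] [Nonempty α]
    [DenselyOrdered α] [NoMinOrder α] [NoMaxOrder α] : ∃ R : α → α → Prop, IsRandomOBG R := by
  have := NoMaxOrder.infinite (α := α)
  obtain ⟨ν, c, hc⟩ := exists_finset_coding α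
  refine ⟨fun x y => if ν y < ν x then y ∈ c x else x ∈ c y, ‹_›, ‹_›, ‹_›, ‹_›, ?_, ?_⟩
  all_goals
    intro F G hFG
    refine denseUnbounded_of_forall_exists_mem_Ioo fun lo hi hlohi => ?_
    obtain ⟨x, hx, rfl, hlarge⟩ := hc F (F ∪ G) lo hi hlohi
    refine ⟨x, ⟨fun f hf => ?_, fun g hg => ?_⟩, hx⟩
  · simpa [hlarge f (Finset.mem_union_left _ hf)] using hf
  · simpa [hlarge g (Finset.mem_union_right _ hg)] using Finset.disjoint_right.mp hFG hg
  · simpa [(hlarge f (Finset.mem_union_left _ hf)).not_gt] using hf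
  · simpa [(hlarge g (Finset.mem_union_right _ hg)).not_gt] using Finset.disjoint_right.mp hFG hg

end RandomGraph

section CompactSemigroup

variable {M : Type*} [Semigroup M] [TopologicalSpace M] [CompactSpace M]

theorem exists_minimal_closed_leftIdeal [Nonempty M] :
    ∃ I : Set M, Minimal (fun I => IsClosed I ∧ I.Nonempty ∧ ∀ m, ∀ x ∈ I, m * x ∈ I) I := by
  refine zorn_superset _ fun c hc hchain => ?_
  refine ⟨⋂₀ c, ⟨isClosed_sInter fun I hI => (hc hI).1, ?_, fun m x hx I hI =>
    (hc hI).2.2 m x (hx I hI)⟩, fun I => Set.sInter_subset_of_mem⟩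
  obtain rfl | hne := c.eq_empty_or_nonempty
  · simp
  have := hne.to_subtype
  exact IsCompact.nonempty_sInter_of_directed_nonempty_isCompact_isClosed
    (IsChain.directedOn hchain.symm) (fun I hI => (hc hI).2.1)
    (fun I hI => (hc hI).1.isCompact) (fun I hI => (hc hI).1)

variable [T2Space M]

theorem exists_minimal_idempotent [Nonempty M] (hM : ∀ m : M, Continuous (· * m)) :
    ∃ p : M, IsIdempotentElem p ∧
      ∀ p', IsIdempotentElem p' → p * p' = p' → p' * p = p' → p' = p := by
  obtain ⟨I, hI⟩ := exists_minimal_closed_leftIdeal (M := M)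
  obtain ⟨hclosed, hne, hmul⟩ := hI.prop
  obtain ⟨p, hpI, hp⟩ := exists_idempotent_in_compact_subsemigroup hM I hne hclosed.isCompact
    fun x _ y hy => hmul x y hy
  refine ⟨p, hp, fun p' hp' hpp' hp'p => ?_⟩
  have hp'I : p' ∈ I := hp'p ▸ hmul p' p hpI
  have hrange : Set.range (· * p') = I := by
    refine hI.eq_of_subset ⟨?_, ⟨_, p', rfl⟩, ?_⟩ ?_
    · rw [← Set.image_univ]
      exact (hM p').isClosedMap _ isClosed_univ
    · rintro m _ ⟨x, rfl⟩
      exact ⟨m * x, mul_assoc ..⟩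
    · rintro _ ⟨x, rfl⟩
      exact hmul _ _ hp'I
  obtain ⟨s, rfl : s * p' = p⟩ := hrange ▸ hpI
  calc
    p' = s * p' * p' := hpp'.symm
    _ = s * p' := by rw [mul_assoc, hp'.eq]

theorem exists_idempotent_mem_ideal (hM : ∀ m : M, Continuous (· * m)) {e : M}
    (he : IsIdempotentElem e) {I : Set M} (hclosed : IsClosed I) (hne : I.Nonempty)
    (hleft : ∀ m, ∀ x ∈ I, m * x ∈ I) (hright : ∀ x ∈ I, ∀ m, x * m ∈ I) :
    ∃ q ∈ I, IsIdempotentElem q ∧ e * q = q ∧ q * e = q := by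
  obtain ⟨_, ⟨x, hx, rfl⟩, hr⟩ := exists_idempotent_in_compact_subsemigroup hM ((· * e) '' I)
    (hne.image _) (hclosed.isCompact.image (hM e))
    (by
      rintro _ ⟨x, -, rfl⟩ _ ⟨y, hy, rfl⟩
      exact ⟨x * e * y, hleft _ _ hy, mul_assoc ..⟩)
  set r := x * e
  have hre : r * e = r := by rw [mul_assoc, he.eq]
  have hrI : r ∈ I := hright x hx e
  refine ⟨e * r, hleft _ _ hrI, ?_, by rw [← mul_assoc, he.eq], by rw [mul_assoc, hre]⟩
  change e * r * (e * r) = e * r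
  rw [mul_assoc, ← mul_assoc r, hre, hr]

end CompactSemigroup

section ParameterWords

attribute [local instance] Ultrafilter.mul Ultrafilter.semigroup

theorem ultrafilter_map_mul {M N F : Type*} [Mul M] [Mul N] [FunLike F M N] [MulHomClass F M N]
    (f : F) (U V : Ultrafilter M) : (U * V).map f = U.map f * V.map f := by
  refine Ultrafilter.coe_injective (Filter.ext' fun P => ?_)
  simp only [Ultrafilter.coe_map, eventually_map, Ultrafilter.eventually_mul, map_mul]

/-- Words over the alphabet `Λ` with variables from `κ`: the letters are `Sum.inl x` for `x : Λ`
and the variables are `Sum.inr k` for `k : κ`. Constant words are the case `κ = Empty` and words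
in a single variable the case `κ = Unit`. -/
abbrev ParamWord (Λ κ : Type*) : Type _ := FreeMonoid (Λ ⊕ κ)

variable {Λ κ ι ν : Type*}

/-- Simultaneous substitution of letters or variables for the variables of a word. -/
def substVars (τ : κ → Λ ⊕ ι) : ParamWord Λ κ →* ParamWord Λ ι :=
  FreeMonoid.map (Sum.elim Sum.inl τ)

theorem map_substVars_map_substVars {σ : κ → Λ ⊕ ι} {τ : ι → Λ ⊕ ν} {ρ : κ → Λ ⊕ ν}
    (h : ∀ k, Sum.elim Sum.inl τ (σ k) = ρ k) (U : Ultrafilter (ParamWord Λ κ)) :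
    (U.map (substVars σ)).map (substVars τ) = U.map (substVars ρ) := by
  have hcomp : Sum.elim Sum.inl τ ∘ Sum.elim Sum.inl σ = Sum.elim Sum.inl ρ := by
    ext1 (x | k)
    exacts [rfl, h k]
  rw [Ultrafilter.map_map, substVars, substVars, substVars, ← MonoidHom.coe_comp,
    ← FreeMonoid.map_comp, hcomp]

theorem map_substVars_inr (U : Ultrafilter (ParamWord Λ κ)) : U.map (substVars Sum.inr) = U := by
  rw [substVars, Sum.elim_inl_inr, FreeMonoid.map_id, MonoidHom.coe_id, Ultrafilter.map_id]

theorem mem_substVars {w : ParamWord Λ κ} {k : κ} (hk : Sum.inr k ∈ w)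
    (τ : κ → Λ ⊕ ι) : τ k ∈ substVars τ w :=
  FreeMonoid.mem_map.mpr ⟨_, hk, rfl⟩

/-- An idempotent ultrafilter `p` on constant words together with an ultrafilter `q` on words in
one variable such that `q` absorbs `p` on the left and every substitution of a letter for the
variable maps `q` to `p`. Its existence is an ultrafilter form of the Hales–Jewett theorem. -/
structure IsHalesJewettPair (p : Ultrafilter (ParamWord Λ Empty))
    (q : Ultrafilter (ParamWord Λ Unit)) : Prop where
  idem : IsIdempotentElem p
  absorb : p.map (substVars Empty.elim) * q = q
  map_subst_letter (x : Λ) : q.map (substVars fun _ => Sum.inl x) = p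
  eventually_mem : ∀ᶠ w : ParamWord Λ Unit in q, Sum.inr () ∈ w

variable (Λ) in
theorem exists_isHalesJewettPair :
    ∃ (p : Ultrafilter (ParamWord Λ Empty)) (q : Ultrafilter (ParamWord Λ Unit)),
      IsHalesJewettPair p q := by
  obtain ⟨p, hp, hmin⟩ := exists_minimal_idempotent (M := Ultrafilter (ParamWord Λ Empty))
    Ultrafilter.continuous_mul_left
  let P : Ultrafilter (ParamWord Λ Unit) := p.map (substVars Empty.elim)
  have hP : IsIdempotentElem P := by
    rw [IsIdempotentElem, ← ultrafilter_map_mul, hp.eq]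
  let V : Set (ParamWord Λ Unit) := {w | Sum.inr () ∈ w}
  have hleft (U U' : Ultrafilter (ParamWord Λ Unit)) (hU' : V ∈ U') : V ∈ U * U' :=
    (Ultrafilter.eventually_mul _ _ (· ∈ V)).mpr <| .of_forall fun w =>
      (show ∀ᶠ w' in U', w' ∈ V from hU').mono fun w' hw' => FreeMonoid.mem_mul.mpr (.inr hw')
  have hright (U : Ultrafilter (ParamWord Λ Unit)) (hU : V ∈ U) (U') : V ∈ U * U' :=
    (Ultrafilter.eventually_mul _ _ (· ∈ V)).mpr <|
      (show ∀ᶠ w in U, w ∈ V from hU).mono fun w hw => .of_forall fun w' =>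
        FreeMonoid.mem_mul.mpr (.inl hw)
  obtain ⟨q, hqV, hq, hPq, hqP⟩ := exists_idempotent_mem_ideal Ultrafilter.continuous_mul_left hP
    (ultrafilter_isClosed_basic V) ⟨pure (FreeMonoid.of (Sum.inr ())), by simp [V]⟩ hleft hright
  refine ⟨p, q, hp, hPq, fun x => ?_, hqV⟩
  let σ : ParamWord Λ Unit →* ParamWord Λ Empty := substVars fun _ => Sum.inl x
  have hσP : P.map σ = p := by
    rw [map_substVars_map_substVars (ρ := Sum.inr) (fun k => k.elim), map_substVars_inr]
  refine hmin _ ?_ ?_ ?_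
  · rw [IsIdempotentElem, ← ultrafilter_map_mul, hq.eq]
  · rw [← hσP, ← ultrafilter_map_mul, hPq]
  · rw [← hσP, ← ultrafilter_map_mul, hqP]

variable {p : Ultrafilter (ParamWord Λ Empty)} {q : Ultrafilter (ParamWord Λ Unit)}

/-- For `l = [k₁, …, kₙ]`, the ultrafilter `q(k₁) * ⋯ * q(kₙ) * p` on words with variables
from `κ`, where `q(k)` is the ultrafilter `q` with its variable renamed to `k`. -/
def wordUltrafilter (p : Ultrafilter (ParamWord Λ Empty)) (q : Ultrafilter (ParamWord Λ Unit))
    (l : List κ) : Ultrafilter (ParamWord Λ κ) :=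
  l.foldr (fun k U => q.map (substVars fun _ => Sum.inr k) * U) (p.map (substVars Empty.elim))

namespace IsHalesJewettPair

theorem mul_wordUltrafilter (h : IsHalesJewettPair p q) (l : List κ) :
    p.map (substVars Empty.elim) * wordUltrafilter p q l = wordUltrafilter p q l := by
  cases l with
  | nil => rw [wordUltrafilter, List.foldr_nil, ← ultrafilter_map_mul, h.idem.eq]
  | cons k l =>
    have habsorb : p.map (substVars Empty.elim) * q.map (substVars fun _ => Sum.inr k) =
        q.map (substVars fun _ => Sum.inr k) := by
      conv_rhs => rw [← h.absorb, ultrafilter_map_mul,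
        map_substVars_map_substVars (ρ := Empty.elim) (fun k => k.elim)]
    rw [wordUltrafilter, List.foldr_cons, ← mul_assoc, habsorb]

/-- Replacing a variable by a letter turns `q` into `p`, which the following factors absorb. -/
theorem map_substVars_wordUltrafilter (h : IsHalesJewettPair p q) (τ : κ → Λ ⊕ ι) (l : List κ) :
    (wordUltrafilter p q l).map (substVars τ) =
      wordUltrafilter p q (l.filterMap fun k => (τ k).getRight?) := by
  induction l with
  | nil => exact map_substVars_map_substVars (fun k => k.elim) p
  | cons k l ih =>
    have hsplit : (wordUltrafilter p q (k :: l)).map (substVars τ) =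
        q.map (substVars fun _ => τ k) *
          wordUltrafilter p q (l.filterMap fun k => (τ k).getRight?) := by
      rw [← ih, wordUltrafilter, List.foldr_cons, ultrafilter_map_mul,
        map_substVars_map_substVars (ρ := fun _ => τ k) fun _ => rfl]
      rfl
    rw [hsplit]
    rcases hk : τ k with x | i
    · have hletter : q.map (substVars fun _ => Sum.inl x) =
          p.map (substVars Empty.elim : ParamWord Λ Empty →* ParamWord Λ ι) := by
        rw [← h.map_subst_letter x,
          map_substVars_map_substVars (ρ := fun _ => Sum.inl x) fun _ => rfl]
      rw [List.filterMap_cons_none (by rw [hk]; rfl), hletter, h.mul_wordUltrafilter]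
    · rw [List.filterMap_cons_some (by rw [hk]; rfl)]
      rfl

theorem eventually_inr_mem (h : IsHalesJewettPair p q) {l : List κ} {k : κ} (hk : k ∈ l) :
    ∀ᶠ w : ParamWord Λ κ in wordUltrafilter p q l, Sum.inr k ∈ w := by
  induction l with
  | nil => simp at hk
  | cons k' l ih =>
    rw [wordUltrafilter, List.foldr_cons, Ultrafilter.eventually_mul]
    rcases List.mem_cons.mp hk with rfl | hkl
    · refine eventually_map.mpr (h.eventually_mem.mono fun w hw => .of_forall fun w' => ?_)
      exact FreeMonoid.mem_mul.mpr (.inl (mem_substVars hw _))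
    · exact .of_forall fun w => (ih hkl).mono fun w' hw' => FreeMonoid.mem_mul.mpr (.inr hw')

end IsHalesJewettPair

end ParameterWords

section BitMatrices

variable {Λ κ ι γ : Type*}

/-- The first position at which the variable `k` occurs in the word `w` (the length of `w` if there
is none). -/
def varPos [DecidableEq κ] (k : κ) (w : ParamWord Λ κ) : ℕ :=
  w.toList.findIdx fun c => c.getRight? = some k

theorem varPos_substVars [DecidableEq κ] [DecidableEq ι] {τ : κ → Λ ⊕ ι} {k : κ} {i : ι}
    (h : ∀ k', (τ k').getRight? = some i ↔ k' = k) (w : ParamWord Λ κ) :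
    varPos i (substVars τ w) = varPos k w := by
  rw [varPos, varPos, substVars, FreeMonoid.toList_map, List.findIdx_map]
  congr 1
  ext1 (x | k')
  · rfl
  · simp [h]

/-- A word whose letters are maps `ρ → Bool` is a matrix of bits with rows indexed by `ρ`, in which
some columns are variables. This is its row with index `r`, where `ε k` is the bit substituted for
the variable `k`. -/
def rowBits {ρ : Type*} (r : ρ) (ε : κ → Bool) (w : ParamWord (ρ → Bool) κ) : List Bool :=
  w.toList.map (Sum.elim (· r) ε)

theorem rowBits_substVars {ρ : Type*} (r : ρ) (ε : ι → Bool) (τ : κ → (ρ → Bool) ⊕ ι)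
    (w : ParamWord (ρ → Bool) κ) :
    rowBits r ε (substVars τ w) = rowBits r (fun k => Sum.elim (· r) ε (τ k)) w := by
  rw [rowBits, rowBits, substVars, FreeMonoid.toList_map, List.map_map]
  congr 1
  ext1 (x | k) <;> rfl

theorem getElem?_rowBits_varPos [DecidableEq κ] {ρ : Type*} {w : ParamWord (ρ → Bool) κ} {k : κ}
    (hk : Sum.inr k ∈ w) (r : ρ) (ε : κ → Bool) : (rowBits r ε w)[varPos k w]? = some (ε k) := by
  have hlt : varPos k w < w.toList.length :=
    List.findIdx_lt_length_of_exists ⟨Sum.inr k, hk, by simp⟩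
  have hget : w.toList[varPos k w] = Sum.inr k :=
    Sum.getRight?_eq_some_iff.mp (of_decide_eq_true (List.findIdx_getElem (w := hlt)))
  rw [rowBits, List.getElem?_map, List.getElem?_eq_getElem hlt, hget]
  rfl

/-- The variables outside the range of `y` can be replaced by letters, chosen so that the rows in
question do not change; this is possible because the rows are distinct. -/
theorem IsHalesJewettPair.eventually_rowBits_varPos_iff [DecidableEq κ] [DecidableEq γ] {ρ : Type*}
    {p : Ultrafilter (ParamWord (ρ → Bool) Empty)} {q : Ultrafilter (ParamWord (ρ → Bool) Unit)}
    (h : IsHalesJewettPair p q) {r : ι → ρ} (hr : Injective r) (E : ι → κ → Bool) {y : γ → κ}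
    {g : κ → Option γ} (hg : IsPartialInv y g) (l : List κ)
    (G : (ι → List Bool) → (γ → ℕ) → Prop) :
    (∀ᶠ w in wordUltrafilter p q l, G (fun i => rowBits (r i) (E i) w) fun j => varPos (y j) w) ↔
      ∀ᶠ w in wordUltrafilter p q (l.filterMap g),
        G (fun i => rowBits (r i) (E i ∘ y) w) fun j => varPos j w := by
  classical
  let letter (k : κ) : ρ → Bool := fun s => decide (∃ i, r i = s ∧ E i k)
  let τ (k : κ) : (ρ → Bool) ⊕ γ := (g k).elim (Sum.inl (letter k)) Sum.inr
  have hτ (k : κ) : (τ k).getRight? = g k := by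
    cases hk : g k <;> simp [τ, hk]
  have hrow (i : ι) (w : ParamWord (ρ → Bool) κ) :
      rowBits (r i) (E i ∘ y) (substVars τ w) = rowBits (r i) (E i) w := by
    rw [rowBits_substVars]
    congr 1
    ext1 k
    cases hk : g k with
    | none => simp [τ, hk, letter, hr.eq_iff]
    | some j => simp [τ, hk, (hg j k).mp hk]
  have hpos (j : γ) (w : ParamWord (ρ → Bool) κ) :
      varPos j (substVars τ w) = varPos (y j) w :=
    varPos_substVars (fun k => by rw [hτ, hg, eq_comm]) w
  have hmap := h.map_substVars_wordUltrafilter τ l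
  simp only [hτ] at hmap
  rw [← hmap, Ultrafilter.coe_map, eventually_map]
  simp only [hrow, hpos]

end BitMatrices

section IndependentRows

variable {κ ι : Type*} [DecidableEq κ] [DecidableEq ι]

/-- For `l = [k₁, …, kₙ]`, the ultrafilter on maps `f : κ → ℕ` obtained by choosing `f k₁, …, f kₙ`
successively along a fixed nonprincipal ultrafilter on `ℕ`, and `f k = 0` for `k ∉ l`. -/
noncomputable def rowUltrafilter (l : List κ) : Ultrafilter (κ → ℕ) :=
  l.foldr (fun k U => (hyperfilter ℕ).bind fun r => U.map fun f => update f k r) (pure 0)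

theorem eventually_rowUltrafilter_cons {k : κ} {l : List κ} {P : (κ → ℕ) → Prop} :
    (∀ᶠ f : κ → ℕ in rowUltrafilter (k :: l), P f) ↔
      ∀ᶠ r in hyperfilter ℕ, ∀ᶠ f in rowUltrafilter l, P (update f k r) :=
  Iff.rfl

theorem eventually_rowUltrafilter_comp_iff {x : ι → κ} {g : κ → Option ι} (hg : IsPartialInv x g)
    (l : List κ) (P : (ι → ℕ) → Prop) :
    (∀ᶠ f in rowUltrafilter l, P (f ∘ x)) ↔ ∀ᶠ f in rowUltrafilter (l.filterMap g), P f := by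
  induction l generalizing P with
  | nil => exact Iff.rfl
  | cons k l ih =>
    rw [eventually_rowUltrafilter_cons]
    cases hk : g k with
    | none =>
      have hkx : k ∉ Set.range x := by
        rintro ⟨i, hi⟩
        simp [(hg i k).mpr hi] at hk
      simp only [List.filterMap_cons_none hk, update_comp_eq_of_notMem_range _ _ hkx, ih,
        eventually_const]
    | some i =>
      obtain rfl := (hg i k).mp hk
      simp only [List.filterMap_cons_some hk, update_comp_eq_of_injective _ hg.injective,
        eventually_rowUltrafilter_cons]
      exact eventually_congr (.of_forall fun r => ih fun f => P (update f i r))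

theorem eventually_rowUltrafilter_ne {l : List κ} {k : κ} (hk : k ∈ l) (r : ℕ) :
    ∀ᶠ f : κ → ℕ in rowUltrafilter l, f k ≠ r := by
  induction l with
  | nil => simp at hk
  | cons k' l ih =>
    rw [eventually_rowUltrafilter_cons]
    by_cases hkk' : k = k'
    · have hne : ∀ᶠ r' in hyperfilter ℕ, r' ≠ r :=
        compl_mem_hyperfilter_of_finite (Set.finite_singleton r)
      exact hne.mono fun r' hr' => .of_forall fun f => by simpa [hkk'] using hr'
    · simpa [hkk'] using ih ((List.mem_cons.mp hk).resolve_left hkk')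

theorem eventually_rowUltrafilter_apply_ne_apply {l : List κ} {k k' : κ} (hk : k ∈ l) (hk' : k' ∈ l)
    (hne : k ≠ k') : ∀ᶠ f : κ → ℕ in rowUltrafilter l, f k ≠ f k' := by
  induction l with
  | nil => simp at hk
  | cons k₀ l ih =>
    rw [eventually_rowUltrafilter_cons]
    refine .of_forall fun r => ?_
    by_cases h : k = k₀
    · subst h
      have hkl' := (List.mem_cons.mp hk').resolve_left hne.symm
      simpa [hne.symm, eq_comm] using eventually_rowUltrafilter_ne hkl' r
    · have hkl := (List.mem_cons.mp hk).resolve_left h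
      by_cases h' : k' = k₀
      · subst h'
        simpa [hne] using eventually_rowUltrafilter_ne hkl r
      · simpa [h, h'] using ih hkl ((List.mem_cons.mp hk').resolve_left h')

theorem eventually_injective_rowUltrafilter [Finite κ] {l : List κ} (hl : ∀ k, k ∈ l) :
    ∀ᶠ f : κ → ℕ in rowUltrafilter l, Injective f := by
  have hne : ∀ᶠ f : κ → ℕ in rowUltrafilter l, ∀ k k', k ≠ k' → f k ≠ f k' :=
    eventually_all.mpr fun k => eventually_all.mpr fun k' =>
      eventually_imp_distrib_left.mpr fun h =>
        eventually_rowUltrafilter_apply_ne_apply (hl k) (hl k') h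
  exact hne.mono fun f hf k k' hkk' => not_imp_not.mp (hf k k') hkk'

end IndependentRows

section GenericMatrices

theorem eventually_forall_mem_finset {ι κ : Type*} [Finite ι] (x : ι → κ) :
    ∀ᶠ H : Finset κ in Ultrafilter.of (atTop : Filter (Finset κ)), ∀ i, x i ∈ H :=
  eventually_all.mpr fun i => Ultrafilter.of_le _ <|
    (eventually_ge_atTop {x i}).mono fun _ hH => Finset.singleton_subset_iff.mp hH

variable {κ : Type*} [LinearOrder κ]

theorem filterMap_sort_eq_finRange {n : ℕ} {x : Fin n → κ} (hx : StrictMono x)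
    {g : κ → Option (Fin n)} (hg : IsPartialInv x g) {H : Finset κ} (hH : ∀ i, x i ∈ H) :
    H.sort.filterMap g = List.finRange n := by
  have hsorted : (H.sort.filterMap g).Pairwise (· < ·) := by
    refine H.sortedLT_sort.pairwise.filterMap g fun k k' hkk' i hi j hj => ?_
    obtain rfl := (hg i k).mp hi
    obtain rfl := (hg j k').mp hj
    exact hx.lt_iff_lt.mp hkk'
  refine hsorted.sortedLT.eq_of_mem_iff (List.pairwise_lt_finRange n).sortedLT fun i => ?_
  simp only [List.mem_filterMap, Finset.mem_sort, List.mem_finRange, iff_true]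
  exact ⟨x i, hH i, (hg i (x i)).mpr rfl⟩

/-- A matrix of bits with rows indexed by `ℕ`, some of whose columns are variables from `κ`,
together with the choice of a row for each element of `κ`. -/
abbrev MarkedMatrix (κ : Type*) : Type _ := (κ → ℕ) × ParamWord (ℕ → Bool) κ

variable (κ) in
/-- The ultrafilter of generic pairs `(f, w)` of a choice of rows and a word. Rows and variables are
chosen for the elements of a finite subset of `κ`, listed in increasing order, and then for larger
and larger such subsets. -/
noncomputable def genericUltrafilter (p : Ultrafilter (ParamWord (ℕ → Bool) Empty))
    (q : Ultrafilter (ParamWord (ℕ → Bool) Unit)) : Ultrafilter (MarkedMatrix κ) :=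
  (Ultrafilter.of (atTop : Filter (Finset κ))).bind fun H =>
    (rowUltrafilter H.sort).bind fun f => (wordUltrafilter p q H.sort).map (Prod.mk f)

variable {p : Ultrafilter (ParamWord (ℕ → Bool) Empty)}
  {q : Ultrafilter (ParamWord (ℕ → Bool) Unit)}

theorem eventually_genericUltrafilter {P : MarkedMatrix κ → Prop} :
    (∀ᶠ t : MarkedMatrix κ in genericUltrafilter κ p q, P t) ↔
      ∀ᶠ H : Finset κ in Ultrafilter.of (atTop : Filter (Finset κ)),
        ∀ᶠ f : κ → ℕ in rowUltrafilter H.sort,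
          ∀ᶠ w : ParamWord (ℕ → Bool) κ in wordUltrafilter p q H.sort, P (f, w) :=
  Iff.rfl

namespace IsHalesJewettPair

/-- On the right-hand side, `x` has disappeared and `y` enters only through the bits `E i (y j)`. -/
theorem eventually_genericUltrafilter_iff (h : IsHalesJewettPair p q) {n m : ℕ} {x : Fin n → κ}
    {y : Fin m → κ} (hx : StrictMono x) (hy : StrictMono y) (E : Fin n → κ → Bool)
    (G : (Fin n → List Bool) → (Fin m → ℕ) → Prop) :
    (∀ᶠ t : MarkedMatrix κ in genericUltrafilter κ p q,
        G (fun i => rowBits (t.1 (x i)) (E i) t.2) fun j => varPos (y j) t.2) ↔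
      ∀ᶠ r : Fin n → ℕ in rowUltrafilter (List.finRange n),
        ∀ᶠ w : ParamWord (ℕ → Bool) (Fin m) in wordUltrafilter p q (List.finRange m),
          G (fun i => rowBits (r i) (E i ∘ y) w) fun j => varPos j w := by
  classical
  have hgx := hx.injective.isPartialInv
  have hgy := hy.injective.isPartialInv
  refine eventually_genericUltrafilter.trans <| (eventually_congr ?_).trans eventually_const
  filter_upwards [eventually_forall_mem_finset x, eventually_forall_mem_finset y] with H hxH hyH
  rw [← filterMap_sort_eq_finRange hx hgx hxH, ← eventually_rowUltrafilter_comp_iff hgx]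
  refine eventually_congr ?_
  have hinj : ∀ᶠ f : κ → ℕ in rowUltrafilter H.sort, Injective (f ∘ x) := by
    refine (eventually_rowUltrafilter_comp_iff hgx _ Injective).mpr ?_
    rw [filterMap_sort_eq_finRange hx hgx hxH]
    exact eventually_injective_rowUltrafilter List.mem_finRange
  filter_upwards [hinj] with f hf
  rw [← filterMap_sort_eq_finRange hy hgy hyH]
  exact h.eventually_rowBits_varPos_iff hf E hgy H.sort G

theorem eventually_getElem?_rowBits_varPos (h : IsHalesJewettPair p q) (i j : κ) (ε : κ → Bool) :
    ∀ᶠ t : MarkedMatrix κ in genericUltrafilter κ p q,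
      (rowBits (t.1 i) ε t.2)[varPos j t.2]? = some (ε j) := by
  rw [eventually_genericUltrafilter]
  filter_upwards [eventually_forall_mem_finset fun _ : Unit => j] with H hH
  exact .of_forall fun f => (h.eventually_inr_mem ((Finset.mem_sort _).mpr (hH ()))).mono
    fun w hw => getElem?_rowBits_varPos hw _ _

end IsHalesJewettPair

end GenericMatrices

section EncodingGraphs

variable {L : FirstOrder.Language.{u, v}} {T : L.Theory}

theorem FormulaHasIP.exists_realize_iff {α β : Type*} {φ : L.Formula (α ⊕ β)}
    (h : FormulaHasIP T φ) {I J : Type*} [Countable I] (r : I → J → Prop) :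
    ∃ (N : Theory.ModelType.{u, v, max u v} T) (a : I → α → N) (b : J → β → N),
      ∀ i j, φ.Realize (Sum.elim (a i) (b j)) ↔ r i j := by
  obtain ⟨N, a, b, hab⟩ := h
  obtain ⟨e, he⟩ := exists_injective_nat I
  refine ⟨N, a ∘ e, fun j => b (e '' {i | r i j}), fun i j => ?_⟩
  rw [comp_apply, hab, he.mem_set_image, Set.mem_ofPred_eq]

theorem FormulaHasIP.exists_isLStarIndiscernible {da db : ℕ} {φ : L.Formula (Fin da ⊕ Fin db)}
    (h : FormulaHasIP T φ) (R : ℚ → ℚ → Prop) :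
    ∃ (N : Theory.ModelType.{u, v, max u v} T) (a : ℚ → Fin da → N) (b : ℚ → Fin db → N),
      IsLStarIndiscernible (L := L) R a b ∧ ∀ i j, φ.Realize (Sum.elim (a i) (b j)) ↔ R i j := by
  classical
  obtain ⟨M, a, b, hab⟩ :=
    h.exists_realize_iff fun (s : List Bool) (v : ℕ) => s[v]? = some true
  obtain ⟨p, q, hpq⟩ := exists_isHalesJewettPair (ℕ → Bool)
  obtain ⟨N, ofFun, łoś⟩ := exists_ultrapower M.is_model (genericUltrafilter ℚ p q)
  let bits (i k : ℚ) : Bool := decide (R i k)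
  let A (i : ℚ) (z : Fin da) : N := ofFun fun t => a (rowBits (t.1 i) (bits i) t.2) z
  let B (j : ℚ) (z : Fin db) : N := ofFun fun t => b (varPos j t.2) z
  refine ⟨N, A, B, isLStarIndiscernible_of_forall_strictMono ?_, fun i j => ?_⟩
  · intro n m x x' y y' hx hx' hy hy' hR ψ
    have hjoint (x : Fin n → ℚ) (y : Fin m → ℚ) : jointAssignment A B x y = fun v => ofFun fun t =>
        jointAssignment a b (fun i => rowBits (t.1 (x i)) (bits (x i)) t.2)
          (fun j => varPos (y j) t.2) v := by
      ext (v | v) <;> rfl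
    have hbits (i) : bits (x i) ∘ y = bits (x' i) ∘ y' :=
      funext fun j => decide_eq_decide.mpr (hR i j)
    rw [hjoint, hjoint, łoś, łoś,
      hpq.eventually_genericUltrafilter_iff hx hy (fun i => bits (x i)) fun X Y =>
        ψ.Realize (jointAssignment a b X Y),
      hpq.eventually_genericUltrafilter_iff hx' hy' (fun i => bits (x' i)) fun X Y =>
        ψ.Realize (jointAssignment a b X Y)]
    simp only [hbits]
  · have helim : Sum.elim (A i) (B j) = fun v => ofFun fun t =>
        Sum.elim (a (rowBits (t.1 i) (bits i) t.2)) (b (varPos j t.2)) v := by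
      ext (z | z) <;> rfl
    rw [helim, łoś]
    simp only [hab]
    have hedge : ∀ᶠ t : MarkedMatrix ℚ in genericUltrafilter ℚ p q,
        ((rowBits (t.1 i) (bits i) t.2)[varPos j t.2]? = some true ↔ R i j) :=
      (hpq.eventually_getElem?_rowBits_varPos i j (bits i)).mono fun t ht => by
        rw [ht, Option.some_inj, decide_eq_true_iff]
    rw [eventually_congr hedge, eventually_const]

end EncodingGraphs

theorem IsRandomOBG.not_mutuallyIndiscernible {L : FirstOrder.Language.{u, v}}
    {M : Type (max u v)} [L.Structure M] {ι : Type*} [LinearOrder ι] {R : ι → ι → Prop}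
    (hR : IsRandomOBG R) {γ δ : Type*} [Finite δ] {a : ι → γ → M} {b : ι → δ → M}
    {φ : L.Formula (γ ⊕ δ)} (h : ∀ i j, φ.Realize (Sum.elim (a i) (b j)) ↔ R i j) :
    ¬ MutuallyIndiscernible (L := L) a b := by
  rintro ⟨hind, -⟩
  obtain ⟨-, -, ⟨z⟩, -, hdense, -⟩ := hR
  obtain ⟨i, hi, -⟩ := (hdense {z} ∅ (by simp)).2.1 z
  obtain ⟨i', hi', -⟩ := (hdense ∅ {z} (by simp)).2.1 z
  obtain ⟨d, ⟨e⟩⟩ := Finite.exists_equiv_fin δ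
  let f : γ ⊕ δ → (Fin 1 × γ) ⊕ Fin d := Sum.map (Prod.mk 0) e
  have hreal (k : ι) : (φ.relabel f).Realize
      (Sum.elim (fun v : Fin 1 × γ => a k v.2) (b z ∘ e.symm)) ↔ R k z := by
    rw [Formula.realize_relabel, Sum.elim_comp_map, comp_assoc, e.symm_comp_self, comp_id]
    exact h k z
  have hmem (l) : (b z ∘ e.symm) l ∈ ⋃ j, Set.range (b j) :=
    Set.mem_iUnion_of_mem z (Set.mem_range_self _)
  have hiff := hind 1 d (fun _ => i) (fun _ => i') (Subsingleton.strictMono _)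
    (Subsingleton.strictMono _) (b z ∘ e.symm) hmem (φ.relabel f)
  rw [hreal, hreal] at hiff
  exact hi'.2 z (by simp) (hiff.mp (hi.1 z (by simp)))

theorem nip_iff_LStar_indiscernible_mutually_indiscernible_general
    {L : FirstOrder.Language.{u, v}} (T : L.Theory) :
    (∀ (m n : ℕ) (φ : L.Formula (Fin m ⊕ Fin n)), ¬ FormulaHasIP T φ) ↔
      (∀ (M : Type (max u v)) [L.Structure M] [Nonempty M], M ⊨ T →
        ∀ (da db : ℕ) (a : ℚ → Fin da → M) (b : ℚ → Fin db → M) (R : ℚ → ℚ → Prop),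
          IsRandomOBG R → IsLStarIndiscernible (L := L) R a b →
            MutuallyIndiscernible (L := L) a b) := by
  refine ⟨fun hNIP M _ _ hM da db a b R hR hind => hind.mutuallyIndiscernible hM hR hNIP,
    fun h m n φ hφ => ?_⟩
  obtain ⟨R, hR⟩ := exists_isRandomOBG ℚ
  obtain ⟨N, a, b, hind, hab⟩ := hφ.exists_isLStarIndiscernible R
  exact hR.not_mutuallyIndiscernible hab (h N N.is_model m n a b R hR hind)

/-- A complete theory `T` is NIP iff every `L*`-indiscernible family
`(āᵢ, b̄ᵢ : i ∈ ℚ)` in a model of `T`, indexed by the random ordered bipartite graph `G*`,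
consists of two mutually indiscernible sequences. -/
theorem nip_iff_LStar_indiscernible_mutually_indiscernible
    {L : FirstOrder.Language.{u, v}} (T : L.Theory) (hT : T.IsComplete) :
    (∀ (m n : ℕ) (φ : L.Formula (Fin m ⊕ Fin n)), ¬ FormulaHasIP T φ) ↔
      (∀ (M : Type (max u v)) [L.Structure M] [Nonempty M], M ⊨ T →
        ∀ (da db : ℕ) (a : ℚ → Fin da → M) (b : ℚ → Fin db → M) (R : ℚ → ℚ → Prop),
          IsRandomOBG R → IsLStarIndiscernible (L := L) R a b →
            MutuallyIndiscernible (L := L) a b) :=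
  nip_iff_LStar_indiscernible_mutually_indiscernible_general T
end

section
/- Let T be a complete first-order theory and let n ≥ 1. If for every model M of T, every formula φ(x₁, …, xₙ) with parameters from M, where x₁, …, xₙ are single variables, is n-dependent, then T is n-dependent (i.e., every formula φ(x̄₁, …, x̄ₙ) without parameters, in finite tuples of variables, is n-dependent). -/
open FirstOrder FirstOrder.Language

universe u v

/-- A parameter-free formula `φ(x̄₁, …, x̄ₘ; ȳ)` (in `m + 1` groups of variables, the `k`-th
group of size `d k` and the last of size `e`) has the `(m+1)`-independence property with
respect to `T` if in some model of `T` there are an array `(ā_{k,i} : k < m, i < ω)` and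
tuples `(b̄_S : S ⊆ ω^m)` such that `φ(ā_{0,i₀}, …, ā_{m-1,i_{m-1}}; b̄_S)` holds iff
`(i₀, …, i_{m-1}) ∈ S`. -/
def FormulaHasnIP {L : FirstOrder.Language.{u, v}} (T : L.Theory) {m : ℕ} {d : Fin m → ℕ}
    {e : ℕ} (φ : L.Formula ((Σ k : Fin m, Fin (d k)) ⊕ Fin e)) : Prop :=
  ∃ (N : FirstOrder.Language.Theory.ModelType.{u, v, max u v} T)
    (a : (k : Fin m) → ℕ → Fin (d k) → N) (b : Set (Fin m → ℕ) → Fin e → N),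
    ∀ (i : Fin m → ℕ) (S : Set (Fin m → ℕ)),
      φ.Realize (Sum.elim (fun v : Σ k : Fin m, Fin (d k) => a v.1 (i v.1) v.2) (b S)) ↔ i ∈ S

/-- A formula `φ(x̄₁, …, x̄ₘ; ȳ)` with parameters `c` from `M` has the `(m+1)`-independence
property if the above configuration exists in some elementary extension of `M`. -/
def HasnIPWithParams {L : FirstOrder.Language.{u, v}} {M : Type (max u v)} [L.Structure M]
    {m : ℕ} {d : Fin m → ℕ} {e : ℕ} {γ : Type*}
    (φ : L.Formula (((Σ k : Fin m, Fin (d k)) ⊕ Fin e) ⊕ γ)) (c : γ → M) : Prop :=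
  ∃ (N : ElemExt L M) (a : (k : Fin m) → ℕ → Fin (d k) → N.carrier)
    (b : Set (Fin m → ℕ) → Fin e → N.carrier),
    ∀ (i : Fin m → ℕ) (S : Set (Fin m → ℕ)),
      φ.Realize (Sum.elim
        (Sum.elim (fun v : Σ k : Fin m, Fin (d k) => a v.1 (i v.1) v.2) (b S))
        (N.emb ∘ c)) ↔ i ∈ S

/-!
Group the variables of a relation into blocks and, treating the blocks symmetrically, say that it
codes hypergraphs if it induces all finite partite hypergraphs, one part for each block. If some
block has a variable `v₀` besides others, either making `v₀` a parameter preserves this property,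
or there is a finite `T` such that, over every fixed value of `v₀`, every box of values of the
other blocks with sides `T` misses some pattern. In the latter case let `F` be the set of patterns
realized on a transversal of a large hypergraph over the value of `v₀` in its code. Iterating the
Hales–Jewett theorem, once for each pattern, we may assume that `F = F(η)` depends only on the
pattern `η` which the hypergraph induces on the transversal. Now `η ∈ F(η)` for every `η`, whereas
`η ∉ F(∅)` for some `η`; walking from `η` to `∅` one point at a time, some change of a single
point `p` switches the truth of "`η` is realized". Hence the relation "`η` is realized", in `v₀`
and in the values of the other blocks at the position `p`, codes hypergraphs. It is definable and
quantifies over the variables other than `v₀` in the block of `v₀`, so in either case a variable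
has been eliminated. Once all blocks are single variables, an ultrapower provides an infinite
configuration.
-/

universe w

section Ramsey

variable {κ T Y Y' Y'' D : Type*}

/-- The pattern which a `κ`-partite hypergraph `S`, whose parts are copies of `T × Y`, induces on
the transversal `J` choosing in the part `k` the vertex `(t, J k t)` of each fibre `{t} × Y`. -/
def inducedPattern (S : Set (κ → T × Y)) (J : κ → T → Y) : Set (κ → T) :=
  {p | (fun k => (p k, J k (p k))) ∈ S}

theorem inducedPattern_setOf_fst_mem (η : Set (κ → T)) (J : κ → T → Y) :
    inducedPattern {x | (fun k => (x k).1) ∈ η} J = η := rfl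

/-- A fibrewise map of vertices from `κ × T × Y` to `κ × T × Y'`, together with a choice, for each
hypergraph on the source, of a hypergraph on the target that induces it. -/
structure HypergraphExtension (κ T Y Y' : Type*) where
  vertex : κ → T → Y → Y'
  extend : Set (κ → T × Y) → Set (κ → T × Y')
  mem_extend_iff (S : Set (κ → T × Y)) (x : κ → T × Y) :
    (fun k => ((x k).1, vertex k (x k).1 (x k).2)) ∈ extend S ↔ x ∈ S

namespace HypergraphExtension

/-- The image of a transversal under the map of vertices. -/
def mapTransversal (f : HypergraphExtension κ T Y Y') (J : κ → T → Y) : κ → T → Y' :=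
  fun k t => f.vertex k t (J k t)

theorem inducedPattern_extend (f : HypergraphExtension κ T Y Y') (S : Set (κ → T × Y))
    (J : κ → T → Y) : inducedPattern (f.extend S) (f.mapTransversal J) = inducedPattern S J :=
  Set.ext fun p => f.mem_extend_iff S fun k => (p k, J k (p k))

/-- The identity extension. -/
protected def id : HypergraphExtension κ T Y Y where
  vertex _ _ y := y
  extend S := S
  mem_extend_iff _ _ := Iff.rfl

/-- The composition of two extensions. -/
def comp (g : HypergraphExtension κ T Y' Y'') (f : HypergraphExtension κ T Y Y') :
    HypergraphExtension κ T Y Y'' where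
  vertex k t y := g.vertex k t (f.vertex k t y)
  extend S := g.extend (f.extend S)
  mem_extend_iff S x := (g.mem_extend_iff _ _).trans (f.mem_extend_iff S x)

end HypergraphExtension

/-- The pairs of a hypergraph and a transversal inducing the pattern `η`: the alphabet to which the
Hales–Jewett theorem is applied. -/
abbrev PatternRealization (κ T Y : Type*) (η : Set (κ → T)) : Type _ :=
  {a : Set (κ → T × Y) × (κ → T → Y) // inducedPattern a.1 a.2 = η}

/-- The amalgam over `η` of a family of hypergraphs on `κ × T × Y`, as a hypergraph on
`κ × T × (D → Y)`: an edge whose projections all conform to `η` conforms to `η`, every other one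
does not. -/
def patternAmalgam (η : Set (κ → T)) (σ : D → Set (κ → T × Y)) : Set (κ → T × (D → Y)) :=
  {x | (∀ d, (fun k => ((x k).1, (x k).2 d)) ∈ σ d ↔ (fun k => (x k).1) ∈ η) ↔
    (fun k => (x k).1) ∈ η}

/-- The extension defined by a combinatorial line: a hypergraph, respectively a vertex, is placed
at the active coordinates of the line, and the constant coordinates are filled by the two
components of the letters. -/
def HypergraphExtension.ofLine {η : Set (κ → T)}
    (l : Combinatorics.Line (PatternRealization κ T Y η) D) :
    HypergraphExtension κ T Y (D → Y) where
  vertex k t y d := (l.idxFun d).elim y fun a => a.1.2 k t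
  extend S := patternAmalgam η fun d => (l.idxFun d).elim S fun a => a.1.1
  mem_extend_iff S x := by
    have conforms_iff : (∀ d, (fun k => ((x k).1, (l.idxFun d).elim (x k).2
        fun a => a.1.2 k (x k).1)) ∈ (l.idxFun d).elim S (fun a => a.1.1) ↔
          (fun k => (x k).1) ∈ η) ↔ (x ∈ S ↔ (fun k => (x k).1) ∈ η) := by
      constructor
      · intro h
        obtain ⟨d, hd⟩ := l.proper
        simpa only [hd, Option.elim_none] using h d
      · intro h d
        cases hd : l.idxFun d with
        | none => exact h
        | some a => exact Set.ext_iff.mp a.2 fun k => (x k).1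
    exact (iff_congr conforms_iff Iff.rfl).trans (by tauto)

namespace HypergraphExtension

variable {η : Set (κ → T)} (l : Combinatorics.Line (PatternRealization κ T Y η) D)

theorem ofLine_extend (a : PatternRealization κ T Y η) :
    (ofLine l).extend a.1.1 = patternAmalgam η fun d => (l a d).1.1 := by
  refine congrArg (patternAmalgam η) (funext fun d => ?_)
  cases hd : l.idxFun d <;> simp [hd]

theorem ofLine_mapTransversal (a : PatternRealization κ T Y η) :
    (ofLine l).mapTransversal a.1.2 = fun k t d => (l a d).1.2 k t := by
  funext k t d
  cases hd : l.idxFun d <;> simp [mapTransversal, ofLine, hd]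

end HypergraphExtension

theorem exists_extension_mono_on_pattern [Finite κ] [Finite T] (Y : Type*) [Finite Y]
    (C : Type*) [Finite C] (η : Set (κ → T)) :
    ∃ D : Type, Finite D ∧ ∀ color : Set (κ → T × (D → Y)) → (κ → T → D → Y) → C,
      ∃ (f : HypergraphExtension κ T Y (D → Y)) (c : C), ∀ S J, inducedPattern S J = η →
        color (f.extend S) (f.mapTransversal J) = c := by
  obtain ⟨D, _, hD⟩ :=
    Combinatorics.Line.exists_mono_in_high_dimension (PatternRealization κ T Y η) C
  refine ⟨D, inferInstance, fun color => ?_⟩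
  obtain ⟨l, c, hl⟩ := hD fun w =>
    color (patternAmalgam η fun d => (w d).1.1) fun k t d => (w d).1.2 k t
  refine ⟨.ofLine l, c, fun S J hSJ => ?_⟩
  rw [← hl ⟨(S, J), hSJ⟩]
  exact congrArg₂ color (HypergraphExtension.ofLine_extend l ⟨(S, J), hSJ⟩)
    (HypergraphExtension.ofLine_mapTransversal l ⟨(S, J), hSJ⟩)

theorem exists_extension_mono_on_patterns [Finite κ] [Finite T] {C : Type*} [Finite C]
    {H : Set (Set (κ → T))} (hH : H.Finite) :
    ∀ (Y : Type w) [Finite Y], ∃ Y' : Type w, Finite Y' ∧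
      ∀ color : Set (κ → T × Y') → (κ → T → Y') → C, ∃ f : HypergraphExtension κ T Y Y',
        ∀ η ∈ H, ∃ c, ∀ S J, inducedPattern S J = η →
          color (f.extend S) (f.mapTransversal J) = c := by
  induction H, hH using Set.Finite.induction_on with
  | empty => exact fun Y _ => ⟨Y, inferInstance, fun _ => ⟨.id, by simp⟩⟩
  | @insert η H _ _ ih =>
    intro Y _
    obtain ⟨D, _, hD⟩ := exists_extension_mono_on_pattern Y C η
    obtain ⟨Y', hY', h⟩ := ih (D → Y)
    refine ⟨Y', hY', fun color => ?_⟩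
    obtain ⟨g, hg⟩ := h color
    obtain ⟨f, c, hf⟩ := hD fun S J => color (g.extend S) (g.mapTransversal J)
    refine ⟨g.comp f, ?_⟩
    rintro θ (rfl | hθ)
    · exact ⟨c, hf⟩
    · obtain ⟨c', hc'⟩ := hg θ hθ
      exact ⟨c', fun S J hSJ =>
        hc' (f.extend S) (f.mapTransversal J) ((f.inducedPattern_extend S J).trans hSJ)⟩

theorem exists_extension_color_eq_inducedPattern [Finite κ] [Finite T] (C : Type*) [Finite C]
    (Y : Type w) [Finite Y] :
    ∃ Y' : Type w, Finite Y' ∧ ∀ color : Set (κ → T × Y') → (κ → T → Y') → C,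
      ∃ (f : HypergraphExtension κ T Y Y') (F : Set (κ → T) → C), ∀ S J,
        color (f.extend S) (f.mapTransversal J) = F (inducedPattern S J) := by
  obtain ⟨Y', hY', h⟩ := exists_extension_mono_on_patterns (C := C)
    (Set.finite_univ (α := Set (κ → T))) Y
  refine ⟨Y', hY', fun color => ?_⟩
  obtain ⟨f, hf⟩ := h color
  choose F hF using fun η => hf η (Set.mem_univ η)
  exact ⟨f, F, fun S J => hF _ S J rfl⟩

end Ramsey

section Shattering

variable {κ T I X A Z : Type*}

/-- The relation `R(x; z_k : k ∈ κ)` shatters a box `∏_k {z_{k,j} : j ∈ J}`. -/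
def ShattersBox (R : X → (κ → Z) → Prop) (J : Type*) : Prop :=
  ∃ z : κ → J → Z, ∀ S : Set (κ → J), ∃ x, ∀ j, R x (fun k => z k (j k)) ↔ j ∈ S

/-- The subsets of the box `∏_k {w_{k,t} : t ∈ T}` cut out by `R(x; ·)` for some `x` in the fibre
of `π` over `a`. -/
def tracesOver (R : X → (κ → Z) → Prop) (π : X → A) (a : A) (w : κ → T → Z) :
    Set (Set (κ → T)) :=
  {η | ∃ x, π x = a ∧ ∀ p, R x (fun k => w k (p k)) ↔ p ∈ η}

theorem exists_insert_not_iff {α : Type*} [Finite α] {G : Set α → Prop} {s : Set α}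
    (hs : G s) (hempty : ¬ G ∅) : ∃ t p, ¬ (G (insert p t) ↔ G t) := by
  by_contra! h
  have iff_empty : ∀ t : Set α, G t ↔ G ∅ := fun t => by
    induction t, t.toFinite using Set.Finite.induction_on with
    | empty => exact Iff.rfl
    | insert _ _ ih => exact (h _ _).trans ih
  exact hempty ((iff_empty s).mp hs)

/-- A hypergraph which induces the pattern `θ`, or `insert p θ`, on the transversal
`switchTransversal p i` according to whether `i ∉ S` or `i ∈ S`. -/
def switchHypergraph (θ : Set (κ → T)) (p : κ → T) (S : Set (κ → I)) :
    Set (κ → T × Option I) :=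
  {x | (fun k => (x k).1) ∈ θ ∨
    (fun k => (x k).1) = p ∧ ∃ i ∈ S, ∀ k, (x k).2 = some (i k)}

open Classical in
/-- The transversal moving only over the position `p`, where it picks `i`. -/
noncomputable def switchTransversal (p : κ → T) (i : κ → I) : κ → T → Option I :=
  fun k => Function.update (fun _ => none) (p k) (some (i k))

theorem inducedPattern_switch (θ : Set (κ → T)) (p : κ → T) (S : Set (κ → I)) (i : κ → I) :
    inducedPattern (switchHypergraph θ p S) (switchTransversal p i) =
      {q | q ∈ θ ∨ q = p ∧ i ∈ S} := by
  ext q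
  refine or_congr_right (and_congr_right ?_)
  intro hq
  obtain rfl : q = p := hq
  simp only [switchTransversal, Function.update_self, Option.some_inj, ← funext_iff]
  exact ⟨fun ⟨_, h, h'⟩ => h' ▸ h, fun h => ⟨i, h, rfl⟩⟩

theorem exists_iff_mem_switch {G : Set (κ → T) → Prop} {θ : Set (κ → T)} {p : κ → T}
    (hp : ¬ (G (insert p θ) ↔ G θ)) (S : Set (κ → I)) :
    ∃ S' : Set (κ → I), ∀ i, G {q | q ∈ θ ∨ q = p ∧ i ∈ S'} ↔ i ∈ S := by
  have G_iff (P : Prop) :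
      G {q | q ∈ θ ∨ q = p ∧ P} ↔ P ∧ G (insert p θ) ∨ ¬ P ∧ G θ := by
    by_cases hP : P
    · simp [hP, Set.insert_def, or_comm]
    · simp [hP]
  refine ⟨{i | i ∈ S ↔ G (insert p θ)}, fun i => (G_iff _).trans ?_⟩
  simp only [Set.mem_ofPred_eq]
  tauto

open Classical in
theorem exists_shattersBox_tracesOver [Finite κ] (T I : Type w) [Finite T] [Finite I] :
    ∃ J : Type w, Finite J ∧ ∀ (R : X → (κ → Z) → Prop) (π : X → A), ShattersBox R J →
      (∀ a (w : κ → T → Z), ∃ η, η ∉ tracesOver R π a w) →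
      ∃ (η : Set (κ → T)) (p : κ → T) (w : κ → T → Z),
        ShattersBox (fun a z => η ∈ tracesOver R π a
          fun k => Function.update (w k) (p k) (z k)) I := by
  obtain ⟨Y, _, hY⟩ :=
    exists_extension_color_eq_inducedPattern (κ := κ) (T := T) (Set (Set (κ → T))) (Option I)
  refine ⟨T × Y, inferInstance, fun R π ⟨z, hz⟩ hmissing => ?_⟩
  choose x hx using hz
  obtain ⟨f, F, hF⟩ := hY fun S J => tracesOver R π (π (x S)) fun k t => z k (t, J k t)
  have mem_F (η : Set (κ → T)) : η ∈ F η := by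
    rw [← inducedPattern_setOf_fst_mem (Y := Option I) η fun _ _ => none, ← hF,
      ← f.inducedPattern_extend]
    exact ⟨_, rfl, fun p => hx _ _⟩
  obtain ⟨η, hη⟩ : ∃ η, η ∉ F ∅ := by
    rw [← inducedPattern_setOf_fst_mem (Y := Option I) ∅ fun _ _ => none, ← hF]
    exact hmissing _ _
  obtain ⟨θ, p, hθp⟩ := exists_insert_not_iff (G := fun θ => η ∈ F θ) (mem_F η) hη
  refine ⟨η, p, fun k t => z k (t, f.vertex k t none),
    fun k i => z k (p k, f.vertex k (p k) (some i)), fun S => ?_⟩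
  obtain ⟨S', hS'⟩ := exists_iff_mem_switch (G := fun θ => η ∈ F θ) hθp S
  refine ⟨π (x (f.extend (switchHypergraph θ p S'))), fun i => ?_⟩
  rw [← hS' i, ← inducedPattern_switch, ← hF]
  refine iff_of_eq (congrArg (fun w => η ∈ tracesOver R π _ w) (funext₂ fun k t => ?_))
  by_cases ht : t = p k
  · subst ht
    simp [HypergraphExtension.mapTransversal, switchTransversal]
  · simp [HypergraphExtension.mapTransversal, switchTransversal, ht]

end Shattering

section Coding

variable {K V Γ N : Type*}

/-- The set `P`, whose variables are grouped into blocks by `β` and whose parameters are set to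
`c`, codes every `K`-partite hypergraph with all parts equal to `I`. This is a form of the
independence property which is symmetric in the blocks. -/
def CodesHypergraphs (β : V → K) (P : Set (V ⊕ Γ → N)) (c : Γ → N) (I : Type*) : Prop :=
  ∀ E : Set (K → I), ∃ a : V → I → N, ∀ i, Sum.elim (fun v => a v (i (β v))) c ∈ P ↔ i ∈ E

/-- `P` codes the finite hypergraphs, with parameters depending only on the size of the parts. -/
def CodesFiniteHypergraphs (β : V → K) (P : Set (V ⊕ Γ → N)) : Prop :=
  ∀ q : ℕ, ∃ c, CodesHypergraphs β P c (Fin q)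

/-- Whether a tuple belongs to `P` depends only on the parameters and on the variables in `s`. -/
def SupportedOn (P : Set (V ⊕ Γ → N)) (s : Set V) : Prop :=
  ∀ c, DependsOn (fun w : V → N => Sum.elim w c ∈ P) s

theorem SupportedOn.mem_iff {P : Set (V ⊕ Γ → N)} {s : Set V} (h : SupportedOn P s)
    {w w' : V → N} (hw : ∀ v ∈ s, w v = w' v) (c : Γ → N) :
    Sum.elim w c ∈ P ↔ Sum.elim w' c ∈ P :=
  iff_of_eq (h c hw)

theorem supportedOn_univ (P : Set (V ⊕ Γ → N)) : SupportedOn P Set.univ :=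
  fun _ => dependsOn_univ _

theorem CodesHypergraphs.of_injective {β : V → K} {P : Set (V ⊕ Γ → N)} {c : Γ → N}
    {I I' : Type*} (h : CodesHypergraphs β P c I') {f : I → I'} (hf : Function.Injective f) :
    CodesHypergraphs β P c I := by
  intro E
  obtain ⟨a, ha⟩ := h ((f ∘ ·) '' E)
  exact ⟨fun v j => a v (f j), fun i =>
    (ha (f ∘ i)).trans hf.comp_left.mem_set_image⟩

theorem CodesFiniteHypergraphs.exists_codesHypergraphs {β : V → K} {P : Set (V ⊕ Γ → N)}
    (h : CodesFiniteHypergraphs β P) (I : Type*) [Finite I] : ∃ c, CodesHypergraphs β P c I :=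
  (h (Nat.card I)).imp fun _ hc => hc.of_injective (Finite.equivFin I).injective

theorem exists_codesFiniteHypergraphs_of_finite {ι : Type*} [Finite ι] {β : V → K}
    {P : ι → Set (V ⊕ Γ → N)} (h : ∀ q : ℕ, ∃ x c, CodesHypergraphs β (P x) c (Fin q)) :
    ∃ x, CodesFiniteHypergraphs β (P x) := by
  by_contra! hbad
  simp only [CodesFiniteHypergraphs, not_forall] at hbad
  choose q hq using hbad
  obtain ⟨x, c, hc⟩ := h (Nat.card (Σ x, Fin (q x)))
  have injective_mk : Function.Injective (Sigma.mk (β := fun x => Fin (q x)) x) :=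
    sigma_mk_injective
  exact hq x ⟨c, hc.of_injective ((Finite.equivFin _).injective.comp injective_mk)⟩

open Classical in
/-- `P` as a relation between the block `k₀` and the other blocks, each block being represented by
a value for every variable, of which only those belonging to the block matter. -/
def blockRel (β : V → K) (k₀ : K) (P : Set (V ⊕ Γ → N)) (c : Γ → N) (x : V → N)
    (z : {k // k ≠ k₀} → V → N) : Prop :=
  Sum.elim (fun v => if h : β v = k₀ then x v else z ⟨β v, h⟩ v) c ∈ P

theorem blockRel_congr {k₀ : K} {s : Set V} (hP : SupportedOn P s) {c : Γ → N} {x : V → N}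
    {z z' : {k // k ≠ k₀} → V → N} (h : ∀ v ∈ s, ∀ hv : β v ≠ k₀, z ⟨β v, hv⟩ v = z' ⟨β v, hv⟩ v) :
    blockRel β k₀ P c x z ↔ blockRel β k₀ P c x z' := by
  refine hP.mem_iff (fun v hvs => ?_) c
  by_cases hv : β v = k₀
  · simp [hv]
  · simpa [hv] using h v hvs hv

theorem CodesHypergraphs.shattersBox_blockRel {β : V → K} {P : Set (V ⊕ Γ → N)} {c : Γ → N}
    {J : Type*} (k₀ : K)
    (h : CodesHypergraphs β P c (J ⊕ Set ({k // k ≠ k₀} → J))) :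
    ShattersBox (blockRel β k₀ P c) J := by
  classical
  let index (S : Set ({k // k ≠ k₀} → J)) (j : {k // k ≠ k₀} → J) (k : K) :
      J ⊕ Set ({k // k ≠ k₀} → J) := if h : k = k₀ then .inr S else .inl (j ⟨k, h⟩)
  obtain ⟨a, ha⟩ := h {i | ∃ S, ∃ j ∈ S, index S j = i}
  refine ⟨fun _ j v => a v (.inl j), fun S => ⟨fun v => a v (.inr S), fun j => ?_⟩⟩
  have index_mem_iff : (∃ S', ∃ j' ∈ S', index S' j' = index S j) ↔ j ∈ S := by
    refine ⟨fun ⟨S', j', hj', heq⟩ => ?_, fun hj => ⟨S, j, hj, rfl⟩⟩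
    have hS : S' = S := by simpa [index] using congrFun heq k₀
    have hj : j' = j := funext fun k => by simpa [index, k.2] using congrFun heq k
    rwa [← hS, ← hj]
  refine Iff.trans (iff_of_eq (congrArg (· ∈ P) ?_)) ((ha (index S j)).trans index_mem_iff)
  refine congrArg (Sum.elim · c) (funext fun v => ?_)
  by_cases hv : β v = k₀ <;> simp [index, hv]

theorem ShattersBox.codesHypergraphs {β : V → K} {k₀ : K} {P : Set (V ⊕ Γ → N)} {c : Γ → N}
    {J : Type*} (h : ShattersBox (blockRel β k₀ P c) J) : CodesHypergraphs β P c J := by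
  classical
  intro E
  obtain ⟨z, hz⟩ := h
  choose x hx using hz
  let glue (j : J) (t : {k // k ≠ k₀} → J) (k : K) : J := if h : k = k₀ then j else t ⟨k, h⟩
  have glue_restrict (i : K → J) : glue (i k₀) (fun k => i k) = i := by
    funext k
    by_cases hk : k = k₀ <;> simp [glue, hk]
  refine ⟨fun v j => if h : β v = k₀ then x {t | glue j t ∈ E} v else z ⟨β v, h⟩ j v,
    fun i => ?_⟩
  refine Iff.trans (iff_of_eq (congrArg (· ∈ P) ?_))
    ((hx {t | glue (i k₀) t ∈ E} fun k => i k).trans (iff_of_eq (congrArg (· ∈ E)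
      (glue_restrict i))))
  refine congrArg (Sum.elim · c) (funext fun v => ?_)
  by_cases hv : β v = k₀ <;> simp [hv]

open Classical in
/-- The variable `v₀` of `P` turned into a parameter. -/
def specializeVar (v₀ : V) (P : Set (V ⊕ Γ → N)) : Set (V ⊕ (Γ ⊕ Unit) → N) :=
  (fun g => g ∘ Sum.elim (fun v => if v = v₀ then .inr (.inr ()) else .inl v)
    (fun γ => .inr (.inl γ))) ⁻¹' P

open Classical in
theorem elim_mem_specializeVar_iff {v₀ : V} {P : Set (V ⊕ Γ → N)} {w : V → N}
    {c : Γ ⊕ Unit → N} :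
    Sum.elim w c ∈ specializeVar v₀ P ↔
      Sum.elim (Function.update w v₀ (c (.inr ()))) (c ∘ .inl) ∈ P := by
  refine iff_of_eq (congrArg (· ∈ P) (funext fun y => ?_))
  rcases y with v | γ
  · by_cases hv : v = v₀ <;> simp [hv]
  · rfl

theorem definable_specializeVar {L : FirstOrder.Language} [L.Structure N] {v₀ : V}
    {P : Set (V ⊕ Γ → N)} (hP : (∅ : Set N).Definable L P) :
    (∅ : Set N).Definable L (specializeVar v₀ P) :=
  hP.preimage_comp _

theorem SupportedOn.specializeVar {v₀ : V} {P : Set (V ⊕ Γ → N)} {s : Set V}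
    (h : SupportedOn P s) : SupportedOn (specializeVar v₀ P) (s \ {v₀}) := by
  classical
  intro c w w' hw
  simp only [elim_mem_specializeVar_iff]
  refine propext (h.mem_iff (fun v hv => ?_) _)
  by_cases hv₀ : v = v₀
  · simp [hv₀]
  · simpa [hv₀] using hw v ⟨hv, hv₀⟩

theorem codesHypergraphs_specializeVar {T : Type*} {β : V → K} {v₀ : V} {P : Set (V ⊕ Γ → N)}
    {c : Γ → N} {a : N} {w : {k // k ≠ β v₀} → T → V → N}
    (h : ∀ η, η ∈ tracesOver (blockRel β (β v₀) P c) (fun x => x v₀) a w) :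
    CodesHypergraphs β (specializeVar v₀ P) (Sum.elim c fun _ => a) T := by
  classical
  refine ShattersBox.codesHypergraphs (k₀ := β v₀) ⟨w, fun η => ?_⟩
  obtain ⟨x, hxa, hx⟩ := h η
  refine ⟨x, fun p => Iff.trans ?_ (hx p)⟩
  rw [blockRel, elim_mem_specializeVar_iff]
  refine iff_of_eq (congrArg (fun y => Sum.elim y c ∈ P) (funext fun v => ?_))
  by_cases hv : v = v₀
  · subst hv; simp [hxa]
  · simp [hv]

open Classical in
/-- The set of values of `v₀` and of the other blocks over which the block of `v₀` can be completed
so that `P` induces the pattern `η` on the box obtained from a box of parameters by replacing, in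
the part `k`, the member `p k` by the given value of the block `k`. -/
def patternSet {T : Type*} (β : V → K) (v₀ : V) (P : Set (V ⊕ Γ → N))
    (η : Set ({k // k ≠ β v₀} → T)) (p : {k // k ≠ β v₀} → T) :
    Set (V ⊕ (Γ ⊕ {k // k ≠ β v₀} × T × V) → N) :=
  {g | η ∈ tracesOver (blockRel β (β v₀) P fun γ => g (.inr (.inl γ))) (fun x => x v₀)
    (g (.inl v₀)) fun k =>
      Function.update (fun t v => g (.inr (.inr (k, t, v)))) (p k) fun v => g (.inl v)}

section PatternSet

variable {T : Type*} {β : V → K} {v₀ : V} {P : Set (V ⊕ Γ → N)}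
  {η : Set ({k // k ≠ β v₀} → T)} {p : {k // k ≠ β v₀} → T}

open Classical in
theorem tracesOver_blockRel_update_congr {s : Set V} (hP : SupportedOn P s) {c : Γ → N} {a : N}
    {w : {k // k ≠ β v₀} → T → V → N} {z z' : {k // k ≠ β v₀} → V → N}
    (h : ∀ v ∈ s, ∀ hv : β v ≠ β v₀, z ⟨β v, hv⟩ v = z' ⟨β v, hv⟩ v) :
    tracesOver (blockRel β (β v₀) P c) (fun x => x v₀) a
        (fun k => Function.update (w k) (p k) (z k)) =
      tracesOver (blockRel β (β v₀) P c) (fun x => x v₀) a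
        (fun k => Function.update (w k) (p k) (z' k)) := by
  refine Set.ext fun η => exists_congr fun x => and_congr_right fun _ => forall_congr' fun q =>
    iff_congr (blockRel_congr hP fun v hvs hv => ?_) Iff.rfl
  by_cases hq : q ⟨β v, hv⟩ = p ⟨β v, hv⟩
  · simpa [hq] using h v hvs hv
  · simp [hq]

theorem SupportedOn.patternSet {s : Set V} (h : SupportedOn P s) (hv₀ : v₀ ∈ s) :
    SupportedOn (patternSet β v₀ P η p) {v ∈ s | β v = β v₀ → v = v₀} := by
  intro c w w' hw
  have hw₀ : w v₀ = w' v₀ := hw v₀ ⟨hv₀, fun _ => rfl⟩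
  simp only [_root_.patternSet, Set.mem_ofPred_eq, Sum.elim_inl, Sum.elim_inr, hw₀]
  rw [tracesOver_blockRel_update_congr h]
  exact fun v hvs hv => hw v ⟨hvs, fun hv' => absurd hv' hv⟩

open Classical in
theorem ShattersBox.codesHypergraphs_patternSet {I : Type*} {c : Γ → N}
    {w : {k // k ≠ β v₀} → T → V → N}
    (h : ShattersBox (fun a z => η ∈ tracesOver (blockRel β (β v₀) P c) (fun x => x v₀) a
      fun k => Function.update (w k) (p k) (z k)) I) :
    CodesHypergraphs β (patternSet β v₀ P η p) (Sum.elim c fun y => w y.1 y.2.1 y.2.2) I := by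
  obtain ⟨z, hz⟩ := h
  refine ShattersBox.codesHypergraphs (k₀ := β v₀) ⟨z, fun S => ?_⟩
  obtain ⟨a, ha⟩ := hz S
  refine ⟨fun _ => a, fun i => Iff.trans ?_ (ha i)⟩
  simp only [blockRel, patternSet, Set.mem_ofPred_eq, Sum.elim_inl, Sum.elim_inr, dite_true]
  rw [tracesOver_blockRel_update_congr (supportedOn_univ P)]
  exact fun v _ hv => dif_neg hv

theorem definable_patternSet {L : FirstOrder.Language} [L.Structure N] [Finite K] [Finite V]
    [Finite T] (hP : (∅ : Set N).Definable L P) :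
    (∅ : Set N).Definable L (patternSet β v₀ P η p) := by
  classical
  -- the variables on the right are those of the block of `v₀`, to be quantified over
  let var (q : {k // k ≠ β v₀} → T) : V ⊕ Γ → (V ⊕ (Γ ⊕ {k // k ≠ β v₀} × T × V)) ⊕ V :=
    Sum.elim (fun v => if h : β v = β v₀ then .inr v
      else if q ⟨β v, h⟩ = p ⟨β v, h⟩ then .inl (.inl v)
      else .inl (.inr (.inr (⟨β v, h⟩, q ⟨β v, h⟩, v)))) fun γ => .inl (.inr (.inl γ))
  have definable_iff (q) : (∅ : Set N).Definable L {g | g ∘ var q ∈ P ↔ q ∈ η} := by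
    by_cases hq : q ∈ η
    · simp only [hq, iff_true]
      exact hP.preimage_comp (var q)
    · simp only [hq, iff_false]
      exact (hP.preimage_comp (var q)).compl
  have definable_eq : (∅ : Set N).Definable L
      {g : (V ⊕ (Γ ⊕ {k // k ≠ β v₀} × T × V)) ⊕ V → N | g (.inr v₀) = g (.inl (.inl v₀))} :=
    Set.empty_definable_iff.2
      ⟨(Language.Term.var (.inr v₀)).equal (Language.Term.var (.inl (.inl v₀))), by ext; simp⟩
  convert (definable_eq.inter (Set.definable_iInter_of_finite definable_iff)).exists_of_finite
    using 1
  ext g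
  simp only [patternSet, tracesOver, blockRel, Set.mem_ofPred_eq, Set.mem_inter_iff,
    Set.mem_iInter, Sum.elim_inl, Sum.elim_inr]
  refine exists_congr fun x => and_congr_right fun _ => forall_congr' fun q =>
    iff_congr (iff_of_eq (congrArg (· ∈ P) (funext fun y => ?_))) Iff.rfl
  rcases y with v | γ
  · by_cases hv : β v = β v₀
    · simp [var, hv]
    · by_cases hq : q ⟨β v, hv⟩ = p ⟨β v, hv⟩ <;> simp [var, hv, hq]
  · rfl

end PatternSet

theorem CodesFiniteHypergraphs.specializeVar_or_patternSet [Finite K] {β : V → K}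
    {P : Set (V ⊕ Γ → N)} (h : CodesFiniteHypergraphs β P) (v₀ : V) :
    CodesFiniteHypergraphs β (specializeVar v₀ P) ∨
      ∃ (n : ℕ) (η : Set ({k // k ≠ β v₀} → Fin n)) (p : {k // k ≠ β v₀} → Fin n),
        CodesFiniteHypergraphs β (patternSet β v₀ P η p) := by
  rw [or_iff_not_imp_left, CodesFiniteHypergraphs, not_forall]
  rintro ⟨n, hn⟩
  have missing_pattern (c) (a : N) (w : {k // k ≠ β v₀} → Fin n → V → N) :
      ∃ η, η ∉ tracesOver (blockRel β (β v₀) P c) (fun x => x v₀) a w := by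
    by_contra! hall
    exact hn ⟨_, codesHypergraphs_specializeVar hall⟩
  obtain ⟨⟨η, p⟩, hηp⟩ := exists_codesFiniteHypergraphs_of_finite
    (P := fun ηp : Set ({k // k ≠ β v₀} → Fin n) × ({k // k ≠ β v₀} → Fin n) =>
      patternSet β v₀ P ηp.1 ηp.2) fun q => by
    obtain ⟨J, _, hJ⟩ := exists_shattersBox_tracesOver (κ := {k // k ≠ β v₀}) (Fin n) (Fin q)
    obtain ⟨c, hc⟩ := h.exists_codesHypergraphs (J ⊕ Set ({k // k ≠ β v₀} → J))
    obtain ⟨η, p, w, hw⟩ := hJ _ _ (hc.shattersBox_blockRel (β v₀)) (missing_pattern c)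
    exact ⟨(η, p), _, hw.codesHypergraphs_patternSet⟩
  exact ⟨n, η, p, hηp⟩

end Coding

section Reduction

variable {K V Γ : Type w} {N : Type*} {L : FirstOrder.Language} [L.Structure N]

theorem CodesFiniteHypergraphs.exists_injOn_support [Finite K] [Finite V] [Finite Γ] {β : V → K}
    {P : Set (V ⊕ Γ → N)} {s : Finset V} (hP : (∅ : Set N).Definable L P)
    (hs : SupportedOn P (s : Set V)) (h : CodesFiniteHypergraphs β P) :
    ∃ (Γ' : Type w) (_ : Finite Γ') (P' : Set (V ⊕ Γ' → N)) (s' : Set V), Set.InjOn β s' ∧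
      (∅ : Set N).Definable L P' ∧ SupportedOn P' s' ∧ CodesFiniteHypergraphs β P' := by
  classical
  induction s using Finset.strongInduction generalizing Γ with
  | H s ih =>
    by_cases hinj : Set.InjOn β s
    · exact ⟨Γ, inferInstance, P, s, hinj, hP, hs, h⟩
    obtain ⟨v₀, hv₀, v₁, hv₁, hβ, hne⟩ : ∃ v₀ ∈ s, ∃ v₁ ∈ s, β v₀ = β v₁ ∧ v₀ ≠ v₁ := by
      simpa [Set.InjOn] using hinj
    rcases h.specializeVar_or_patternSet v₀ with h | ⟨n, η, p, h⟩
    · refine ih (s.erase v₀) (Finset.erase_ssubset hv₀) (definable_specializeVar hP) ?_ h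
      simpa using hs.specializeVar
    · refine ih (s.filter fun v => β v = β v₀ → v = v₀) ?_ (definable_patternSet hP) ?_ h
      · exact Finset.filter_ssubset.2 ⟨v₁, hv₁, fun hv => hne (hv hβ.symm).symm⟩
      · simpa using hs.patternSet hv₀

theorem CodesHypergraphs.of_injOn_support [Nonempty N] {β : V → K} {P : Set (V ⊕ Γ → N)}
    {s : Set V} {c : Γ → N} {I : Type*} (hβ : Set.InjOn β s) (hs : SupportedOn P s)
    (h : CodesHypergraphs β P c I) :
    CodesHypergraphs id ((fun g : K ⊕ Γ → N => g ∘ Sum.map β id) ⁻¹' P) c I := by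
  intro E
  obtain ⟨a, ha⟩ := h E
  let a' : K → I → N :=
    Function.extend (fun v : s => β v) (fun v => a v) fun _ _ => Classical.arbitrary N
  have a'_apply (v : V) (hv : v ∈ s) : a' (β v) = a v :=
    hβ.injective.extend_apply _ _ (⟨v, hv⟩ : s)
  refine ⟨a', fun i => Iff.trans ?_ (ha i)⟩
  rw [Set.mem_preimage, Sum.elim_comp_map, Function.comp_id]
  exact hs.mem_iff (fun v hv => congrFun (a'_apply v hv) _) c

theorem CodesFiniteHypergraphs.exists_singleton_blocks [Nonempty N] [Finite K] [Finite V]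
    [Finite Γ] {β : V → K} {P : Set (V ⊕ Γ → N)} (hP : (∅ : Set N).Definable L P)
    (h : CodesFiniteHypergraphs β P) :
    ∃ (Γ' : Type w) (_ : Finite Γ') (P' : Set (K ⊕ Γ' → N)),
      (∅ : Set N).Definable L P' ∧ CodesFiniteHypergraphs id P' := by
  have := Fintype.ofFinite V
  obtain ⟨Γ', hΓ', P', s, hβ, hP', hs, h'⟩ := h.exists_injOn_support (s := Finset.univ) hP
    (by simpa using supportedOn_univ P)
  exact ⟨Γ', hΓ', _, hP'.preimage_comp (Sum.map β id),
    fun q => (h' q).imp fun c hc => hc.of_injOn_support hβ hs⟩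

end Reduction

section Models

variable {L : FirstOrder.Language.{u, v}}

theorem FormulaHasnIP.exists_codesFiniteHypergraphs {T : L.Theory} {m : ℕ} {d : Fin m → ℕ} {e : ℕ}
    {φ : L.Formula ((Σ k : Fin m, Fin (d k)) ⊕ Fin e)} (h : FormulaHasnIP T φ) :
    ∃ N : Theory.ModelType.{u, v, max u v} T,
      CodesFiniteHypergraphs (Sum.elim (fun v => some v.1) fun _ => none)
        {g : ((Σ k : Fin m, Fin (d k)) ⊕ Fin e) ⊕ Empty → N | φ.Realize (g ∘ .inl)} := by
  obtain ⟨N, a, b, hab⟩ := h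
  refine ⟨N, fun q => ⟨Empty.elim, fun E => ?_⟩⟩
  let fibre (j : Fin q) : Set (Fin m → ℕ) :=
    {t | ∃ i ∈ E, i none = j ∧ ∀ k, (i (some k) : ℕ) = t k}
  have mem_fibre (i : Option (Fin m) → Fin q) :
      (fun k => (i (some k) : ℕ)) ∈ fibre (i none) ↔ i ∈ E := by
    refine ⟨fun ⟨i', hi', hnone, hsome⟩ => ?_, fun hi => ⟨i, hi, rfl, fun _ => rfl⟩⟩
    have : i' = i := funext fun
      | none => hnone
      | some k => Fin.ext (hsome k)
    rwa [← this]
  refine ⟨Sum.elim (fun v j => a v.1 j v.2) (fun v j => b (fibre j) v), fun i => ?_⟩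
  refine Iff.trans (iff_of_eq (congrArg φ.Realize (funext fun v => ?_)))
    ((hab _ _).trans (mem_fibre i))
  rcases v with v | v <;> rfl

theorem CodesHypergraphs.exists_shattering {κ Γ J N : Type*} {P : Set (Option κ ⊕ Γ → N)}
    {c : Γ → N} (h : CodesHypergraphs id P c (J ⊕ Set (κ → J))) :
    ∃ (a : κ → J → N) (b : Set (κ → J) → N), ∀ i S,
      Sum.elim (fun o => o.elim (b S) fun k => a k (i k)) c ∈ P ↔ i ∈ S := by
  let index (i : κ → J) (S : Set (κ → J)) (o : Option κ) : J ⊕ Set (κ → J) :=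
    o.elim (.inr S) fun k => .inl (i k)
  obtain ⟨a, ha⟩ := h {x | ∃ S, ∃ i ∈ S, index i S = x}
  refine ⟨fun k j => a (some k) (.inl j), fun S => a none (.inr S), fun i S => ?_⟩
  have index_mem_iff : (∃ S', ∃ i' ∈ S', index i' S' = index i S) ↔ i ∈ S := by
    refine ⟨fun ⟨S', i', hi', heq⟩ => ?_, fun hi => ⟨S, i, hi, rfl⟩⟩
    have hS : S' = S := Sum.inr_injective (congrFun heq none)
    have hi : i' = i := funext fun k => Sum.inl_injective (congrFun heq (some k))
    rwa [← hS, ← hi]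
  refine Iff.trans (iff_of_eq (congrArg (fun y => Sum.elim y c ∈ P) (funext fun o => ?_)))
    ((ha (index i S)).trans index_mem_iff)
  cases o <;> rfl

open Filter in
theorem exists_hasnIPWithParams_ultrapower {N : Type (max u v)} [L.Structure N] [Nonempty N]
    {m : ℕ} {d : Fin m → ℕ} {e : ℕ} {γ : Type*}
    (φ : L.Formula (((Σ k : Fin m, Fin (d k)) ⊕ Fin e) ⊕ γ))
    (h : ∀ q : ℕ, ∃ (c : γ → N) (a : (k : Fin m) → ℕ → Fin (d k) → N)
      (b : Set (Fin m → ℕ) → Fin e → N), ∀ i S, (∀ k, i k ≤ q) →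
        (φ.Realize (Sum.elim (Sum.elim (fun v => a v.1 (i v.1) v.2) (b S)) c) ↔ i ∈ S)) :
    ∃ c : γ → (hyperfilter ℕ : Filter ℕ).Product fun _ => N, HasnIPWithParams φ c := by
  choose c a b habc using h
  refine ⟨fun y => ((fun q => c q y : ∀ _ : ℕ, N) : Product _ _), ⟨_, .refl L _⟩,
    fun k i y => ((fun q => a q k i y : ∀ _ : ℕ, N) : Product _ _),
    fun S y => ((fun q => b q S y : ∀ _ : ℕ, N) : Product _ _), fun i S => ?_⟩
  let value (y : ((Σ k : Fin m, Fin (d k)) ⊕ Fin e) ⊕ γ) (q : ℕ) : N :=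
    Sum.elim (Sum.elim (fun v => a q v.1 (i v.1) v.2) (b q S)) (c q) y
  have eventually_le : ∀ᶠ q in (hyperfilter ℕ : Filter ℕ), ∀ k, i k ≤ q :=
    Nat.hyperfilter_le_atTop (eventually_all.2 fun k => eventually_ge_atTop (i k))
  have eventually_iff : (∀ᶠ q in (hyperfilter ℕ : Filter ℕ), φ.Realize fun y => value y q) ↔
      i ∈ S := by
    rw [eventually_congr (eventually_le.mono fun q hq => habc q i S hq), eventually_const]
  rw [← eventually_iff, ← Ultraproduct.realize_formula_cast]
  refine iff_of_eq (congrArg φ.Realize (funext fun y => ?_))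
  rcases y with (y | y) | y <;> rfl

theorem CodesFiniteHypergraphs.exists_hasnIPWithParams {N : Type (max u v)} [L.Structure N]
    [Nonempty N] {m : ℕ} {Γ : Type*} [Finite Γ] {P : Set (Option (Fin m) ⊕ Γ → N)}
    (hP : (∅ : Set N).Definable L P) (h : CodesFiniteHypergraphs id P) :
    ∃ (k : ℕ) (φ : L.Formula (((Σ _ : Fin m, Fin 1) ⊕ Fin 1) ⊕ Fin k))
      (c : Fin k → (Filter.hyperfilter ℕ : Filter ℕ).Product fun _ => N),
      HasnIPWithParams φ c := by
  obtain ⟨φ, rfl⟩ := Set.empty_definable_iff.1 hP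
  let toVar : Option (Fin m) ⊕ Γ → ((Σ _ : Fin m, Fin 1) ⊕ Fin 1) ⊕ Fin (Nat.card Γ) :=
    Sum.map (fun o => o.elim (.inr 0) fun k => .inl ⟨k, 0⟩) (Finite.equivFin Γ)
  refine ⟨Nat.card Γ, φ.relabel toVar, exists_hasnIPWithParams_ultrapower _ fun q => ?_⟩
  obtain ⟨c, hc⟩ := h.exists_codesHypergraphs
    (Fin (q + 1) ⊕ Set (Fin m → Fin (q + 1)))
  obtain ⟨a, b, hab⟩ := hc.exists_shattering
  refine ⟨c ∘ (Finite.equivFin Γ).symm, fun k i _ => a k (Fin.ofNat (q + 1) i),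
    fun S _ => b {f | (fun k => (f k : ℕ)) ∈ S}, fun i S hi => ?_⟩
  have val_ofNat : (fun k => (Fin.ofNat (q + 1) (i k) : ℕ)) = i :=
    funext fun k => Nat.mod_eq_of_lt (Nat.lt_succ_of_le (hi k))
  rw [Language.Formula.realize_relabel]
  refine Iff.trans (iff_of_eq (congrArg φ.Realize (funext fun y => ?_)))
    ((hab (fun k => Fin.ofNat (q + 1) (i k)) {f | (fun k => (f k : ℕ)) ∈ S}).trans
      (iff_of_eq (congrArg (· ∈ S) val_ofNat)))
  rcases y with (_ | k) | γ
  · rfl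
  · rfl
  · exact congrArg c ((Finite.equivFin Γ).symm_apply_apply γ)

theorem ultrapower_models {T : L.Theory} (N : Theory.ModelType.{u, v, max u v} T) :
    (Filter.hyperfilter ℕ : Filter ℕ).Product (fun _ => N) ⊨ T where
  realize_of_mem _ hψ := (Ultraproduct.sentence_realize _).2 <|
    Filter.Eventually.of_forall fun _ => Theory.realize_sentence_of_mem T hψ

end Models

theorem n_dependent_of_single_variables_with_params_general {L : FirstOrder.Language.{u, v}}
    (T : L.Theory) (m : ℕ)
    (h : ∀ (M : Type (max u v)) [L.Structure M] [Nonempty M], M ⊨ T →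
      ∀ (k : ℕ) (φ : L.Formula (((Σ _ : Fin m, Fin 1) ⊕ Fin 1) ⊕ Fin k))
        (c : Fin k → M), ¬ HasnIPWithParams φ c)
    (d : Fin m → ℕ) (e : ℕ) (φ : L.Formula ((Σ k : Fin m, Fin (d k)) ⊕ Fin e)) :
    ¬ FormulaHasnIP T φ := by
  intro hφ
  obtain ⟨N, hN⟩ := hφ.exists_codesFiniteHypergraphs
  have definable_φ : (∅ : Set N).Definable L
      {g : ((Σ k : Fin m, Fin (d k)) ⊕ Fin e) ⊕ Empty → N | φ.Realize (g ∘ .inl)} :=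
    (Set.empty_definable_iff.2 ⟨φ, rfl⟩).preimage_comp Sum.inl
  obtain ⟨Γ, _, P, hP, hcodes⟩ := hN.exists_singleton_blocks definable_φ
  obtain ⟨k, ψ, c, hψ⟩ := hcodes.exists_hasnIPWithParams hP
  exact h _ (ultrapower_models N) k ψ c hψ

/-- If, in every model `M` of the complete theory `T`, every formula
`φ(x₁, …, xₙ)` in `n` single variables with parameters from `M` is `n`-dependent, then `T` is
`n`-dependent: every parameter-free formula `φ(x̄₁, …, x̄ₙ)` in `n` finite groups of variables
is `n`-dependent. -/
theorem n_dependent_of_single_variables_with_params {L : FirstOrder.Language.{u, v}}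
    (T : L.Theory) (hT : T.IsComplete) (n : ℕ) (hn : 1 ≤ n)
    (h : ∀ (M : Type (max u v)) [L.Structure M] [Nonempty M], M ⊨ T →
      ∀ (k : ℕ) (φ : L.Formula (((Σ _ : Fin (n - 1), Fin 1) ⊕ Fin 1) ⊕ Fin k))
        (c : Fin k → M), ¬ HasnIPWithParams φ c) :
    ∀ (d : Fin (n - 1) → ℕ) (e : ℕ)
      (φ : L.Formula ((Σ k : Fin (n - 1), Fin (d k)) ⊕ Fin e)),
      ¬ FormulaHasnIP T φ :=
  n_dependent_of_single_variables_with_params_general T (n - 1) h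
end
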